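/- arXiv:2410.04051 — 2 statements merged into one kernel-verified Lean document; each statement's English description precedes it below -/
import Mathlib

section
/- The process X = 2K − B does not have the law of the BES(5) process: there exist m ∈ ℕ and times 0 < t₁ < ⋯ < t_m such that the law of the random vector (X(t₁), …, X(t_m)) differs from the law of (‖W(t₁)‖, …, ‖W(t_m)‖), where W is a standard 5-dimensional Brownian motion started at the origin. -/
open MeasureTheory ProbabilityTheory Set Filter Topology
open scoped Classical

noncomputable section

/-- The σ-algebra generated by a process `Y` up to time `t` (over times in `[0, t]`),
i.e. `σ(Y u : 0 ≤ u ≤ t)`. -/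
def natSigma {Ω E : Type*} [MeasurableSpace E] (Y : ℝ → Ω → E) (t : ℝ) :
    MeasurableSpace Ω :=
  ⨆ u : Set.Icc (0 : ℝ) t, MeasurableSpace.comap (Y u) inferInstance

/-- The σ-algebra generated by the whole (nonnegative-time) process `Y`. -/
def procSigma {Ω E : Type*} [MeasurableSpace E] (Y : ℝ → Ω → E) :
    MeasurableSpace Ω :=
  ⨆ u : Set.Ici (0 : ℝ), MeasurableSpace.comap (Y u) inferInstance

/-- `B` is a standard one-dimensional Brownian motion (with `B 0 = 0`) under `P`:
measurable, a.s. starting at `0` and continuous on `[0, ∞)`, with Gaussian increments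
`B t - B s ~ N(0, t - s)` that are independent of the past. -/
structure IsBrownianMotion {Ω : Type*} [MeasurableSpace Ω] (P : Measure Ω)
    (B : ℝ → Ω → ℝ) : Prop where
  measurable : ∀ t : ℝ, Measurable (B t)
  init : ∀ᵐ ω ∂P, B 0 ω = 0
  cont : ∀ᵐ ω ∂P, ContinuousOn (fun t => B t ω) (Set.Ici 0)
  incr_law : ∀ s t : ℝ, 0 ≤ s → s ≤ t →
    P.map (fun ω => B t ω - B s ω) = gaussianReal 0 (Real.toNNReal (t - s))
  incr_indep : ∀ s t : ℝ, 0 ≤ s → s ≤ t →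
    Indep (MeasurableSpace.comap (fun ω => B t ω - B s ω) inferInstance)
      (natSigma B s) P

/-- `W` is a standard `n`-dimensional Brownian motion started at the origin:
its coordinate processes are independent standard one-dimensional Brownian motions. -/
def IsBrownianMotionND {Ω : Type*} [MeasurableSpace Ω] (P : Measure Ω) {n : ℕ}
    (W : ℝ → Ω → EuclideanSpace ℝ (Fin n)) : Prop :=
  (∀ i : Fin n, IsBrownianMotion P (fun t ω => W t ω i)) ∧
  iIndep (fun i : Fin n => procSigma (fun t ω => W t ω i)) P

/-- The least concave majorant on `[0, ∞)` of a function `f : ℝ → ℝ`: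
`t ↦ inf { c t | c concave on [0,∞) and c ≥ f on [0,∞) }`. -/
def concaveMajorant (f : ℝ → ℝ) (t : ℝ) : ℝ :=
  sInf {y | ∃ c : ℝ → ℝ, ConcaveOn ℝ (Set.Ici 0) c ∧ (∀ u, 0 ≤ u → f u ≤ c u) ∧ y = c t}

/-- Right-hand derivative. -/
def rightDeriv (f : ℝ → ℝ) (t : ℝ) : ℝ := derivWithin f (Set.Ioi t) t

/-- `D(t)`: the first vertex (contact point of the concave majorant) at or after time `t`. -/
def firstVertex (f : ℝ → ℝ) (t : ℝ) : ℝ :=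
  sInf {u | t ≤ u ∧ concaveMajorant f u = f u}

/-- The concave majorant process `K` of `B`. -/
def Kproc {Ω : Type*} (B : ℝ → Ω → ℝ) (t : ℝ) (ω : Ω) : ℝ :=
  concaveMajorant (fun u => B u ω) t

/-- The process `X = 2K - B`. -/
def Xproc {Ω : Type*} (B : ℝ → Ω → ℝ) (t : ℝ) (ω : Ω) : ℝ :=
  2 * Kproc B t ω - B t ω

/-- The right-hand slope process `K'` of the concave majorant. -/
def Kslope {Ω : Type*} (B : ℝ → Ω → ℝ) (t : ℝ) (ω : Ω) : ℝ :=
  rightDeriv (fun u => Kproc B u ω) t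

/-- The process `D` of first vertices: `D(t) = inf {u ≥ t : K u = B u}`. -/
def Dproc {Ω : Type*} (B : ℝ → Ω → ℝ) (t : ℝ) (ω : Ω) : ℝ :=
  firstVertex (fun u => B u ω) t

/-- A process `Y` is Markov (w.r.t. its natural filtration): for all `0 ≤ s ≤ t`,
`σ(Y t)` is conditionally independent of `σ(Y u : 0 ≤ u ≤ s)` given `σ(Y s)`. -/
def IsMarkov {Ω E : Type*} [mΩ : MeasurableSpace Ω] [StandardBorelSpace Ω]
    [MeasurableSpace E] (P : Measure Ω) [IsFiniteMeasure P] (Y : ℝ → Ω → E) : Prop :=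
  ∀ s t : ℝ, 0 ≤ s → s ≤ t →
    ∃ hs : MeasurableSpace.comap (Y s) inferInstance ≤ mΩ,
      CondIndep (MeasurableSpace.comap (Y s) inferInstance)
        (MeasurableSpace.comap (Y t) inferInstance)
        (natSigma Y s) hs P

section Helpers

open scoped ENNReal NNReal

lemma natSigma_le {Ω : Type*} [mΩ : MeasurableSpace Ω] {P : Measure Ω} {B : ℝ → Ω → ℝ}
    (hB : IsBrownianMotion P B) (t : ℝ) : natSigma B t ≤ mΩ := by
  refine iSup_le fun u => ?_
  exact measurable_iff_comap_le.1 (hB.measurable u)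

lemma natSigma_mono {Ω : Type*} (B : ℝ → Ω → ℝ) {s t : ℝ} (h : s ≤ t) :
    natSigma B s ≤ natSigma B t := by
  refine iSup_le fun u => ?_
  exact le_iSup (fun u : Set.Icc (0 : ℝ) t => MeasurableSpace.comap (B u) inferInstance)
    ⟨u.1, u.2.1, u.2.2.trans h⟩

lemma measurable_natSigma {Ω : Type*} (B : ℝ → Ω → ℝ) {u t : ℝ} (hu : 0 ≤ u) (h : u ≤ t) :
    Measurable[natSigma B t] (B u) := by
  apply measurable_iff_comap_le.2
  exact le_iSup (fun u : Set.Icc (0 : ℝ) t => MeasurableSpace.comap (B u) inferInstance)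
    ⟨u, hu, h⟩

lemma indep_apply {Ω : Type*} [mΩ : MeasurableSpace Ω] {P : Measure Ω} {B : ℝ → Ω → ℝ}
    (hB : IsBrownianMotion P B) {s t : ℝ} (hs : 0 ≤ s) (hst : s ≤ t) {A : Set Ω}
    (hA : MeasurableSet[natSigma B s] A) {S : Set ℝ} (hS : MeasurableSet S) :
    P (A ∩ {ω | B t ω - B s ω ∈ S}) = P A * gaussianReal 0 (Real.toNNReal (t - s)) S := by
  have h := (Indep_iff _ _ _).1 (hB.incr_indep s t hs hst) {ω | B t ω - B s ω ∈ S} A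
    ⟨S, hS, rfl⟩ hA
  rw [Set.inter_comm, h, mul_comm, ← hB.incr_law s t hs hst,
    Measure.map_apply (by have := hB.measurable t; have := hB.measurable s; fun_prop) hS]
  rfl

lemma gauss_reflect {v : ℝ≥0} (hv : v ≠ 0) (b : ℝ) {T : Set ℝ} (hT : MeasurableSet T) :
    gaussianReal 0 v {z | b - z ∈ T} = ∫⁻ z in T, gaussianPDF 0 v (b - z) := by
  rw [gaussianReal_apply _ hv]
  have h := (Measure.measurePreserving_sub_left (volume : Measure ℝ) b).setLIntegral_comp_preimage hT
    (f := fun z => gaussianPDF 0 v (b - z)) (by fun_prop)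
  rw [← h]
  simp only [sub_sub_cancel]
  rfl

lemma pdf_le {v : ℝ≥0} {x y : ℝ} (h : y ^ 2 ≤ x ^ 2) :
    gaussianPDF 0 v x ≤ gaussianPDF 0 v y := by
  unfold gaussianPDF
  apply ENNReal.ofReal_le_ofReal
  unfold gaussianPDFReal
  simp only [sub_zero]
  gcongr

lemma gauss_shift {v : ℝ≥0} {δ y : ℝ} (hδ : 0 < δ) (hy : δ ≤ y) :
    gaussianReal 0 v {z | y + z ∈ Set.Icc (-2 * δ) (-δ)}
      ≤ gaussianReal 0 v {z | y + z ∈ Set.Icc (3 * δ) (4 * δ)} := by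
  rcases eq_or_ne v 0 with rfl | hv
  · have : (0:ℝ) ∉ {z : ℝ | y + z ∈ Set.Icc (-2 * δ) (-δ)} := by
      simp only [Set.mem_ofPred_eq, Set.mem_Icc, not_and, not_le]
      intro _; linarith
    rw [gaussianReal_zero_var, Measure.dirac_apply' _ (by measurability)]
    rw [Set.indicator_of_notMem this]
    exact zero_le
  · have e : {z | y + z ∈ Set.Icc (3 * δ) (4 * δ)}
        = {z | (2 * δ - 2 * y) - z ∈ {z | y + z ∈ Set.Icc (-2 * δ) (-δ)}} := by
      ext z
      simp only [Set.mem_ofPred_eq, Set.mem_Icc]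
      constructor <;> rintro ⟨h1, h2⟩ <;> constructor <;> linarith
    have hm : MeasurableSet {z | y + z ∈ Set.Icc (-2 * δ) (-δ)} := by measurability
    rw [e, gauss_reflect hv _ hm, gaussianReal_apply _ hv]
    apply setLIntegral_mono (by fun_prop)
    intro z hz
    apply pdf_le
    simp only [Set.mem_ofPred_eq, Set.mem_Icc] at hz
    nlinarith [mul_nonneg (sub_nonneg.2 hy) (by linarith : 0 ≤ δ - y - z)]

lemma pdf_one_le (x : ℝ) : gaussianPDF 0 1 x ≤ 1 := by
  unfold gaussianPDF
  rw [ENNReal.ofReal_le_one]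
  unfold gaussianPDFReal
  have h1 : (1:ℝ) ≤ √(2 * Real.pi * (1:ℝ≥0)) := by
    rw [Real.one_le_sqrt]
    have := Real.pi_gt_three
    push_cast; linarith
  have h2 : (√(2 * Real.pi * (1:ℝ≥0)))⁻¹ ≤ 1 := inv_le_one_of_one_le₀ h1
  have h3 : Real.exp (-(x - 0) ^ 2 / (2 * (1:ℝ≥0))) ≤ 1 := by
    rw [Real.exp_le_one_iff]
    push_cast
    nlinarith [sq_nonneg (x - 0)]
  exact mul_le_one₀ h2 (Real.exp_pos _).le h3

lemma gauss_le_vol (S : Set ℝ) : gaussianReal 0 1 S ≤ volume S := by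
  rw [gaussianReal_apply _ one_ne_zero]
  calc _ ≤ ∫⁻ z in S, 1 := lintegral_mono (fun z => pdf_one_le z)
    _ = _ := by simp

lemma exp_aux {x : ℝ} (h0 : 0 ≤ x) (h1 : x ≤ 1) : Real.exp (-x) ≤ 1 - x / 2 := by
  have h := Real.add_one_le_exp x
  rw [Real.exp_neg]
  rw [inv_le_comm₀ (Real.exp_pos _) (by linarith)]
  refine le_trans ?_ h
  rw [inv_le_iff_one_le_mul₀ (by linarith)]
  nlinarith

lemma gauss_gap {δ : ℝ} (hδ : 0 < δ) (hδ' : δ ≤ 1 / 4) :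
    gaussianReal 0 1 (Set.Icc (3 * δ) (4 * δ)) + ENNReal.ofReal (2 / 5 * δ ^ 3)
      ≤ gaussianReal 0 1 (Set.Icc (-2 * δ) (-δ)) := by
  have e : Set.Icc (3 * δ) (4 * δ) = {z | 2 * δ - z ∈ Set.Icc (-2 * δ) (-δ)} := by
    ext z
    simp only [Set.mem_ofPred_eq, Set.mem_Icc]
    constructor <;> rintro ⟨h1, h2⟩ <;> constructor <;> linarith
  rw [e, gauss_reflect one_ne_zero _ measurableSet_Icc, gaussianReal_apply _ one_ne_zero]
  have hc : ENNReal.ofReal (2 / 5 * δ ^ 3)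
      = ∫⁻ z in Set.Icc (-2 * δ) (-δ), ENNReal.ofReal (2 / 5 * δ ^ 2) := by
    rw [setLIntegral_const, Real.volume_Icc, ← ENNReal.ofReal_mul (by positivity)]
    congr 1; ring
  rw [hc, ← lintegral_add_right _ measurable_const]
  apply setLIntegral_mono (by fun_prop)
  intro z hz
  obtain ⟨hz1, hz2⟩ := hz
  unfold gaussianPDF
  rw [← ENNReal.ofReal_add (gaussianPDFReal_nonneg _ _ _) (by positivity)]
  apply ENNReal.ofReal_le_ofReal
  unfold gaussianPDFReal
  simp only [NNReal.coe_one, mul_one, sub_zero]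
  set q := (√(2 * Real.pi))⁻¹ with hq
  have hq0 : 1 / (2.51 : ℝ) ≤ q := by
    rw [hq, one_div]
    apply inv_anti₀ (by have := Real.pi_gt_three; positivity)
    rw [Real.sqrt_le_left (by norm_num)]
    have := Real.pi_lt_d4
    norm_num; linarith
  have h1 : (7/8:ℝ) ≤ Real.exp (-z ^ 2 / 2) := by
    have := Real.add_one_le_exp (-z ^ 2 / 2)
    nlinarith
  have h2 : Real.exp (-(2 * δ - z) ^ 2 / 2) ≤ Real.exp (-z ^ 2 / 2) * (1 - 2 * δ ^ 2) := by
    calc _ ≤ Real.exp (-z ^ 2 / 2 + -(4 * δ ^ 2)) := by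
          apply Real.exp_le_exp.2; nlinarith
      _ = Real.exp (-z ^ 2 / 2) * Real.exp (-(4 * δ ^ 2)) := Real.exp_add _ _
      _ ≤ _ := by
          gcongr
          have := exp_aux (x := 4 * δ ^ 2) (by positivity) (by nlinarith)
          linarith
  have hqp : 0 < q := lt_of_lt_of_le (by norm_num) hq0
  have h3 : (1/2.51) * (7/8:ℝ) ≤ q * Real.exp (-z ^ 2 / 2) := by gcongr
  have h4 : 1 / 5 ≤ q * Real.exp (-z ^ 2 / 2) := le_trans (by norm_num) h3
  have h5 := mul_le_mul_of_nonneg_left h2 hqp.le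
  nlinarith [mul_le_mul_of_nonneg_right h4 (by positivity : 0 ≤ 2 * δ ^ 2)]

lemma joint_law {Ω : Type*} [mΩ : MeasurableSpace Ω] {P : Measure Ω} [IsProbabilityMeasure P]
    {B : ℝ → Ω → ℝ}
    (hB : IsBrownianMotion P B) {s t : ℝ} (hs : 0 ≤ s) (hst : s ≤ t) {A : Set Ω}
    (hA : MeasurableSet[natSigma B s] A) {Y : Ω → ℝ} (hY : Measurable[natSigma B s] Y)
    {S : Set ℝ} (hS : MeasurableSet S) :
    P (A ∩ {ω | Y ω + (B t ω - B s ω) ∈ S})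
      = ∫⁻ ω in A, gaussianReal 0 (Real.toNNReal (t - s)) {z | Y ω + z ∈ S} ∂P := by
  have hY' : Measurable Y := hY.mono (natSigma_le hB s) le_rfl
  have hA' : MeasurableSet A := natSigma_le hB s _ hA
  have hZ : Measurable (fun ω => B t ω - B s ω) := by
    have := hB.measurable t; have := hB.measurable s; fun_prop
  have hp : ((P.restrict A).map Y).prod (gaussianReal 0 (Real.toNNReal (t - s)))
      = (P.restrict A).map (fun ω => (Y ω, B t ω - B s ω)) := by
    apply Measure.prod_eq
    intro S T hS hT
    rw [Measure.map_apply (hY'.prodMk hZ) (hS.prod hT), Measure.map_apply hY' hS,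
      Measure.restrict_apply (hY' hS), Measure.restrict_apply ((hY'.prodMk hZ) (hS.prod hT)),
      ← indep_apply hB hs hst (MeasurableSet.inter (hY hS) hA) hT]
    congr 1
    ext ω
    simp only [Set.mem_inter_iff, Set.mem_preimage, Set.mem_prod, Set.mem_ofPred_eq]
    tauto
  have hm : MeasurableSet {p : ℝ × ℝ | p.1 + p.2 ∈ S} :=
    (measurable_fst.add measurable_snd) hS
  have h1 : P (A ∩ {ω | Y ω + (B t ω - B s ω) ∈ S})
      = (P.restrict A).map (fun ω => (Y ω, B t ω - B s ω)) {p : ℝ × ℝ | p.1 + p.2 ∈ S} := by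
    rw [Measure.map_apply (hY'.prodMk hZ) hm, Measure.restrict_apply ((hY'.prodMk hZ) hm),
      Set.inter_comm]
    rfl
  rw [h1, ← hp, Measure.prod_apply hm, lintegral_map (measurable_measure_prodMk_left hm) hY']
  rfl

/-- First-index decomposition. -/
def firstAt {Ω : Type*} (C : ℕ → Set Ω) (k : ℕ) : Set Ω := {ω | ω ∈ C k ∧ ∀ j < k, ω ∉ C j}

lemma firstAt_disj {Ω : Type*} (C : ℕ → Set Ω) : Pairwise (Function.onFun Disjoint (firstAt C)) := by
  intro i j hij
  rw [Function.onFun, Set.disjoint_left]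
  rintro ω ⟨h1, h2⟩ ⟨h3, h4⟩
  rcases lt_or_gt_of_ne hij with h | h
  · exact h4 i h h1
  · exact h2 j h h3

lemma firstAt_iUnion {Ω : Type*} (C : ℕ → Set Ω) : ⋃ k, firstAt C k = ⋃ k, C k := by
  ext ω
  simp only [Set.mem_iUnion]
  constructor
  · rintro ⟨k, hk⟩; exact ⟨k, hk.1⟩
  · intro h
    exact ⟨Nat.find h, Nat.find_spec h, fun j hj => Nat.find_min h hj⟩

lemma firstAt_meas {Ω : Type*} {m : MeasurableSpace Ω} (C : ℕ → Set Ω) (k : ℕ)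
    (h : ∀ j ≤ k, MeasurableSet (C j)) : MeasurableSet (firstAt C k) := by
  have : firstAt C k = C k ∩ ⋂ j, ⋂ (_ : j < k), (C j)ᶜ := by
    ext ω; simp [firstAt]
  rw [this]
  refine (h k le_rfl).inter ?_
  exact MeasurableSet.iInter fun j => MeasurableSet.iInter fun hj => (h j hj.le).compl

lemma firstAt_sum {Ω : Type*} [mΩ : MeasurableSpace Ω] (P : Measure Ω) (C : ℕ → Set Ω)
    (hC : ∀ k, MeasurableSet (C k)) {A : Set Ω} (hA : MeasurableSet A) :
    P (A ∩ ⋃ k, C k) = ∑' k, P (A ∩ firstAt C k) := by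
  rw [← firstAt_iUnion, Set.inter_iUnion, measure_iUnion]
  · intro i j hij
    exact (firstAt_disj C hij).mono Set.inter_subset_right Set.inter_subset_right
  · intro k
    exact hA.inter (firstAt_meas C k fun j _ => hC j)

/-- Dyadic grid reflection bound. -/
lemma step_grid {Ω : Type*} [mΩ : MeasurableSpace Ω] {P : Measure Ω} [IsProbabilityMeasure P]
    {B : ℝ → Ω → ℝ}
    (hB : IsBrownianMotion P B) {s t : ℝ} (hs : 0 ≤ s) (hst : t = s + 1) {A : Set Ω}
    (hA : MeasurableSet[natSigma B s] A) {δ : ℝ} (hδ : 0 < δ) (hδ' : δ ≤ 1 / 4)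
    (τ : ℕ → ℝ) (hτ : Monotone τ) (h0 : ∀ k, s ≤ τ k) (h1 : ∀ k, τ k ≤ t) :
    P A * ENNReal.ofReal (2 / 5 * δ ^ 3)
      ≤ P (A ∩ ({ω | B t ω - B s ω ∈ Set.Icc (-2 * δ) (-δ)} ∩
          {ω | ∀ k, B (τ k) ω - B s ω < δ})) := by
  have hA' : MeasurableSet A := natSigma_le hB s _ hA
  have hZ : Measurable (fun ω => B t ω - B s ω) := by
    have := hB.measurable t; have := hB.measurable s; fun_prop
  have hst' : s ≤ t := by linarith
  set C : ℕ → Set Ω := fun k => {ω | B (τ k) ω - B s ω ∈ Set.Ici δ} with hCdef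
  have hY : ∀ k, Measurable[natSigma B (τ k)] (fun ω => B (τ k) ω - B s ω) := fun k =>
    Measurable.sub (measurable_natSigma B (hs.trans (h0 k)) le_rfl)
      (measurable_natSigma B hs (h0 k))
  have hCk : ∀ k, MeasurableSet[natSigma B (τ k)] (C k) := fun k => hY k measurableSet_Ici
  have hC : ∀ k, MeasurableSet (C k) := fun k => natSigma_le hB _ _ (hCk k)
  set I := {ω | B t ω - B s ω ∈ Set.Icc (-2 * δ) (-δ)} with hI
  set I' := {ω | B t ω - B s ω ∈ Set.Icc (3 * δ) (4 * δ)} with hI'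
  have hIm : MeasurableSet I := hZ measurableSet_Icc
  have hIm' : MeasurableSet I' := hZ measurableSet_Icc
  have key : P ((A ∩ I) ∩ ⋃ k, C k) ≤ P (A ∩ I') := by
    calc P ((A ∩ I) ∩ ⋃ k, C k) = ∑' k, P ((A ∩ I) ∩ firstAt C k) :=
          firstAt_sum P C hC (hA'.inter hIm)
      _ ≤ ∑' k, P ((A ∩ I') ∩ firstAt C k) := by
          refine ENNReal.tsum_le_tsum fun k => ?_
          have hF : MeasurableSet[natSigma B (τ k)] (A ∩ firstAt C k) :=
            MeasurableSet.inter (natSigma_mono B (h0 k) _ hA)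
              (firstAt_meas C k fun j hj => natSigma_mono B (hτ hj) _ (hCk j))
          have e : ∀ S : Set ℝ, (A ∩ {ω | B t ω - B s ω ∈ S}) ∩ firstAt C k
              = (A ∩ firstAt C k) ∩
                {ω | (B (τ k) ω - B s ω) + (B t ω - B (τ k) ω) ∈ S} := by
            intro S; ext ω
            have : (B (τ k) ω - B s ω) + (B t ω - B (τ k) ω) = B t ω - B s ω := by ring
            simp only [Set.mem_inter_iff, Set.mem_ofPred_eq, this]
            tauto
          rw [hI, hI', e, e,
            joint_law hB (hs.trans (h0 k)) (h1 k) hF (hY k) measurableSet_Icc,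
            joint_law hB (hs.trans (h0 k)) (h1 k) hF (hY k) measurableSet_Icc]
          refine setLIntegral_mono' (natSigma_le hB _ _ hF) fun ω hω => ?_
          exact gauss_shift hδ hω.2.1
      _ = P ((A ∩ I') ∩ ⋃ k, C k) := (firstAt_sum P C hC (hA'.inter hIm')).symm
      _ ≤ P (A ∩ I') := measure_mono Set.inter_subset_left
  have hone : Real.toNNReal (t - s) = 1 := by simp [hst]
  have e1 : P (A ∩ I) = P A * gaussianReal 0 1 (Set.Icc (-2 * δ) (-δ)) := by
    rw [← hone]; exact indep_apply hB hs hst' hA measurableSet_Icc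
  have e2 : P (A ∩ I') = P A * gaussianReal 0 1 (Set.Icc (3 * δ) (4 * δ)) := by
    rw [← hone]; exact indep_apply hB hs hst' hA measurableSet_Icc
  have hU : MeasurableSet (⋃ k, C k) := MeasurableSet.iUnion hC
  have e3 := measure_inter_add_sdiff (μ := P) (A ∩ I) hU
  have e4 : (A ∩ I) \ (⋃ k, C k) = A ∩ (I ∩ {ω | ∀ k, B (τ k) ω - B s ω < δ}) := by
    ext ω
    simp only [hCdef, Set.mem_sdiff, Set.mem_inter_iff, Set.mem_iUnion, Set.mem_ofPred_eq,
      Set.mem_Ici, not_exists, not_le, and_assoc]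
  rw [e4] at e3
  have e5 : P (A ∩ I') + P A * ENNReal.ofReal (2 / 5 * δ ^ 3) ≤ P (A ∩ I) := by
    rw [e1, e2, ← mul_add]
    exact mul_le_mul_right (gauss_gap hδ hδ') _
  rw [← e3] at e5
  have e6 := e5.trans (add_le_add_left key _)
  exact (ENNReal.add_le_add_iff_left (measure_ne_top _ _)).1 e6

lemma limit_inter {Ω : Type*} [mΩ : MeasurableSpace Ω] {P : Measure Ω} [IsProbabilityMeasure P]
    {A : Set Ω} (hA : MeasurableSet A) {G : ℕ → Set Ω} (hG : ∀ n, MeasurableSet (G n))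
    (hanti : ∀ n, G (n + 1) ⊆ G n) {c : ℝ≥0∞} (hc : ∀ n, c ≤ P (A ∩ G n)) :
    c ≤ P (A ∩ ⋂ n, G n) := by
  rw [Set.inter_iInter]
  have hmono : Antitone (fun n => A ∩ G n) :=
    antitone_nat_of_succ_le fun n => Set.inter_subset_inter_right _ (hanti n)
  have h := tendsto_measure_iInter_atTop (μ := P) (s := fun n => A ∩ G n)
    (fun n => (hA.inter (hG n)).nullMeasurableSet) hmono ⟨0, measure_ne_top _ _⟩
  exact ge_of_tendsto' h hc

/-- The dyadic level-`n` event of staying below `δ` on `[s, s+1]` with a pinned endpoint. -/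
def stepSet {Ω : Type*} (B : ℝ → Ω → ℝ) (s t δ : ℝ) (n : ℕ) : Set Ω :=
  {ω | B t ω - B s ω ∈ Set.Icc (-2 * δ) (-δ)} ∩
    {ω | ∀ k : ℕ, B (s + min ((k : ℝ) / 2 ^ n) 1) ω - B s ω < δ}

lemma dyad (k n : ℕ) : (k : ℝ) / 2 ^ n = ((2 * k : ℕ) : ℝ) / 2 ^ (n + 1) := by
  push_cast
  rw [pow_succ]
  field_simp

lemma stepSet_meas {Ω : Type*} (B : ℝ → Ω → ℝ) {s t : ℝ} (hs : 0 ≤ s) (hst : t = s + 1)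
    (δ : ℝ) (n : ℕ) : MeasurableSet[natSigma B t] (stepSet B s t δ n) := by
  have hY : ∀ u, s ≤ u → u ≤ t → Measurable[natSigma B t] (fun ω => B u ω - B s ω) :=
    fun u h1 h2 => Measurable.sub (measurable_natSigma B (hs.trans h1) h2)
      (measurable_natSigma B hs (by linarith))
  refine MeasurableSet.inter (hY t (by linarith) le_rfl measurableSet_Icc) ?_
  have : {ω | ∀ k : ℕ, B (s + min ((k : ℝ) / 2 ^ n) 1) ω - B s ω < δ}
      = ⋂ k : ℕ, {ω | B (s + min ((k : ℝ) / 2 ^ n) 1) ω - B s ω ∈ Set.Iio δ} := by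
    ext ω; simp
  rw [this]
  refine MeasurableSet.iInter fun k => hY _ ?_ ?_ measurableSet_Iio
  · have : 0 ≤ min ((k : ℝ) / 2 ^ n) 1 := le_min (by positivity) zero_le_one
    linarith
  · have : min ((k : ℝ) / 2 ^ n) 1 ≤ 1 := min_le_right _ _
    linarith

lemma step_bound {Ω : Type*} [mΩ : MeasurableSpace Ω] {P : Measure Ω} [IsProbabilityMeasure P]
    {B : ℝ → Ω → ℝ}
    (hB : IsBrownianMotion P B) {s t : ℝ} (hs : 0 ≤ s) (hst : t = s + 1) {A : Set Ω}
    (hA : MeasurableSet[natSigma B s] A) {δ : ℝ} (hδ : 0 < δ) (hδ' : δ ≤ 1 / 4) :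
    P A * ENNReal.ofReal (2 / 5 * δ ^ 3) ≤ P (A ∩ ⋂ n, stepSet B s t δ n) := by
  refine limit_inter (natSigma_le hB s _ hA)
    (fun n => natSigma_le hB _ _ (stepSet_meas B hs hst δ n)) ?_ ?_
  · rintro n ω ⟨h1, h2⟩
    refine ⟨h1, fun k => ?_⟩
    rw [dyad]; exact h2 (2 * k)
  · intro n
    refine step_grid hB hs hst hA hδ hδ' (fun k => s + min ((k : ℝ) / 2 ^ n) 1) ?_ ?_ ?_
    · intro i j hij
      dsimp only
      gcongr
    · intro k
      have : 0 ≤ min ((k : ℝ) / 2 ^ n) 1 := le_min (by positivity) zero_le_one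
      linarith
    · intro k
      have : min ((k : ℝ) / 2 ^ n) 1 ≤ 1 := min_le_right _ _
      linarith

lemma dyad_tendsto {u : ℝ} (hu : 0 ≤ u) :
    Tendsto (fun n : ℕ => ((⌊u * 2 ^ n⌋₊ : ℕ) : ℝ) / 2 ^ n) atTop (𝓝 u) :=
  (tendsto_nat_floor_mul_div_atTop hu).comp
    (tendsto_pow_atTop_atTop_of_one_lt (by norm_num : (1:ℝ) < 2))

/-- Passing from dyadic times to all times. -/
lemma dyad_cont {f g : ℝ → ℝ} {s : ℝ} (hs : 0 ≤ s) (hf : ContinuousOn f (Set.Ici 0))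
    (hg : Continuous g) {u : ℝ} (hu : 0 ≤ u)
    (h : ∀ n : ℕ, f (s + (⌊u * 2 ^ n⌋₊ : ℕ) / 2 ^ n) - f s
      ≤ g ((⌊u * 2 ^ n⌋₊ : ℕ) / 2 ^ n)) : f (s + u) - f s ≤ g u := by
  have ht := dyad_tendsto hu
  have h1 : Tendsto (fun n : ℕ => s + ((⌊u * 2 ^ n⌋₊ : ℕ) : ℝ) / 2 ^ n) atTop
      (𝓝[Set.Ici 0] (s + u)) := by
    refine tendsto_nhdsWithin_iff.2 ⟨ht.const_add s, Eventually.of_forall fun n => ?_⟩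
    simp only [Set.mem_Ici]; positivity
  have h2 := (hf (s + u) (by simp only [Set.mem_Ici]; positivity)).tendsto.comp h1
  exact le_of_tendsto_of_tendsto' (h2.sub_const (f s)) ((hg.tendsto u).comp ht) h

lemma step_path {Ω : Type*} {B : ℝ → Ω → ℝ} {s t δ : ℝ} (hs : 0 ≤ s) {ω : Ω}
    (hc : ContinuousOn (fun u => B u ω) (Set.Ici 0)) (h : ω ∈ ⋂ n, stepSet B s t δ n)
    {u : ℝ} (hu : 0 ≤ u) (hu1 : u ≤ 1) : B (s + u) ω - B s ω ≤ δ := by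
  refine dyad_cont (g := fun _ => δ) hs hc continuous_const hu fun n => ?_
  have h1 := (Set.mem_iInter.1 h n).2 ⌊u * 2 ^ n⌋₊
  rw [min_eq_left] at h1
  · exact h1.le
  · rw [div_le_one (by positivity)]
    exact (Nat.floor_le (by positivity)).trans (by nlinarith [pow_pos (by norm_num : (0:ℝ) < 2) n])

lemma exp_step {Ω : Type*} [mΩ : MeasurableSpace Ω] {P : Measure Ω} [IsProbabilityMeasure P]
    {B : ℝ → Ω → ℝ}
    (hB : IsBrownianMotion P B) {s t : ℝ} (hs : 0 ≤ s) (hst : s ≤ t) (c : ℝ)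
    {f : Ω → ℝ≥0∞} (hf : Measurable[natSigma B s] f) :
    ∫⁻ ω, f ω * ENNReal.ofReal (Real.exp (c * (B t ω - B s ω) - c ^ 2 * (t - s) / 2)) ∂P
      = ∫⁻ ω, f ω ∂P := by
  have hZ : Measurable (fun ω => B t ω - B s ω) := by
    have := hB.measurable t; have := hB.measurable s; fun_prop
  have hZ' : Measurable[MeasurableSpace.comap (fun ω => B t ω - B s ω) inferInstance]
      (fun ω => B t ω - B s ω) := Measurable.of_comap_le le_rfl
  have hφ : Measurable (fun x : ℝ =>
      ENNReal.ofReal (Real.exp (c * x - c ^ 2 * (t - s) / 2))) := by fun_prop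
  have hmain := lintegral_mul_eq_lintegral_mul_lintegral_of_independent_measurableSpace
    (natSigma_le hB s) (measurable_iff_comap_le.1 hZ) (hB.incr_indep s t hs hst).symm hf
    (hφ.comp hZ')
  simp only [Function.comp_def] at hmain
  rw [hmain]
  have h1 : ∫⁻ ω, ENNReal.ofReal (Real.exp (c * (B t ω - B s ω) - c ^ 2 * (t - s) / 2)) ∂P
      = 1 := by
    rw [← lintegral_map (f := fun x : ℝ =>
      ENNReal.ofReal (Real.exp (c * x - c ^ 2 * (t - s) / 2))) hφ hZ, hB.incr_law s t hs hst]
    have hi := integrable_exp_mul_gaussianReal (μ := 0) (v := Real.toNNReal (t - s)) c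
    have e : ∀ x : ℝ, Real.exp (c * x - c ^ 2 * (t - s) / 2)
        = Real.exp (c * x) * Real.exp (- (c ^ 2 * (t - s) / 2)) := by
      intro x; rw [← Real.exp_add]; ring_nf
    simp_rw [e]
    rw [← ofReal_integral_eq_lintegral_ofReal (hi.mul_const _)
      (Eventually.of_forall fun x => by positivity), integral_mul_const]
    have hm := mgf_gaussianReal (p := gaussianReal 0 (Real.toNNReal (t - s))) (X := id)
      (Measure.map_id) c
    have hm' : ∫ x, Real.exp (c * x) ∂(gaussianReal 0 (Real.toNNReal (t - s)))
        = Real.exp (0 * c + (Real.toNNReal (t - s)) * c ^ 2 / 2) := hm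
    rw [hm', Real.coe_toNNReal _ (by linarith), ← Real.exp_add]
    ring_nf
    simp
  rw [h1, mul_one]

lemma line_grid {Ω : Type*} [mΩ : MeasurableSpace Ω] {P : Measure Ω} [IsProbabilityMeasure P]
    {B : ℝ → Ω → ℝ}
    (hB : IsBrownianMotion P B) {s : ℝ} (hs : 0 ≤ s) {A : Set Ω}
    (hA : MeasurableSet[natSigma B s] A) {δ : ℝ} (hδ : 0 < δ) (hδ' : δ ≤ 1 / 4)
    (τ : ℕ → ℝ) (hτ : Monotone τ) (h0 : ∀ k, 0 ≤ τ k) :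
    P A * ENNReal.ofReal (δ ^ 2)
      ≤ P (A ∩ {ω | ∀ k, B (s + τ k) ω - B s ω < δ + δ * τ k}) := by
  have hA' : MeasurableSet A := natSigma_le hB s _ hA
  set C : ℕ → Set Ω := fun k => {ω | B (s + τ k) ω - B s ω ∈ Set.Ici (δ + δ * τ k)} with hCdef
  have h0' : ∀ k, s ≤ s + τ k := fun k => by linarith [h0 k]
  have hY : ∀ k, Measurable[natSigma B (s + τ k)] (fun ω => B (s + τ k) ω - B s ω) := fun k =>
    Measurable.sub (measurable_natSigma B (hs.trans (h0' k)) le_rfl)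
      (measurable_natSigma B hs (h0' k))
  have hCk : ∀ k, MeasurableSet[natSigma B (s + τ k)] (C k) := fun k => hY k measurableSet_Ici
  have hC : ∀ k, MeasurableSet (C k) := fun k => natSigma_le hB _ _ (hCk k)
  let Z : ℕ → Ω → ℝ≥0∞ := fun k ω =>
    ENNReal.ofReal (Real.exp ((2 * δ) * (B (s + τ k) ω - B s ω) - (2 * δ) ^ 2 * τ k / 2))
  have hZm : ∀ k, Measurable[natSigma B (s + τ k)] (Z k) := by
    intro k
    have hφ : Measurable (fun x : ℝ =>
      ENNReal.ofReal (Real.exp ((2 * δ) * x - (2 * δ) ^ 2 * τ k / 2))) := by fun_prop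
    exact hφ.comp (hY k)
  have hF : ∀ k, MeasurableSet[natSigma B (s + τ k)] (A ∩ firstAt C k) := fun k =>
    MeasurableSet.inter (natSigma_mono B (h0' k) _ hA)
      (firstAt_meas C k fun j hj => natSigma_mono B (by linarith [hτ hj]) _ (hCk j))
  have hZN : ∀ k N, k ≤ N → ∫⁻ ω in A ∩ firstAt C k, Z k ω ∂P
      = ∫⁻ ω in A ∩ firstAt C k, Z N ω ∂P := by
    intro k N hkN
    have hF' := natSigma_le hB _ _ (hF k)
    rw [← lintegral_indicator hF', ← lintegral_indicator hF']
    have hst : s + τ k ≤ s + τ N := by linarith [hτ hkN]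
    rw [← exp_step hB (hs.trans (h0' k)) hst (2 * δ) ((hZm k).indicator (hF k))]
    refine lintegral_congr fun ω => ?_
    by_cases hω : ω ∈ A ∩ firstAt C k
    · rw [Set.indicator_of_mem hω, Set.indicator_of_mem hω]
      simp only [Z]
      rw [← ENNReal.ofReal_mul (by positivity), ← Real.exp_add]
      ring_nf
    · rw [Set.indicator_of_notMem hω, Set.indicator_of_notMem hω, zero_mul]
  have hZA : ∀ N, ∫⁻ ω in A, Z N ω ∂P = P A := by
    intro N
    have h := exp_step hB hs (h0' N) (2 * δ) (f := A.indicator 1)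
      (Measurable.indicator (by exact @measurable_const _ _ _ (natSigma B s) 1) hA)
    rw [lintegral_indicator_one hA'] at h
    rw [← h, ← lintegral_indicator hA']
    refine lintegral_congr fun ω => ?_
    by_cases hω : ω ∈ A
    · rw [Set.indicator_of_mem hω, Set.indicator_of_mem hω]
      simp [Z]
    · rw [Set.indicator_of_notMem hω, Set.indicator_of_notMem hω, zero_mul]
  have hlow : ∀ k, ENNReal.ofReal (Real.exp (2 * δ ^ 2)) * P (A ∩ firstAt C k)
      ≤ ∫⁻ ω in A ∩ firstAt C k, Z k ω ∂P := by
    intro k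
    rw [← setLIntegral_const]
    refine setLIntegral_mono' (natSigma_le hB _ _ (hF k)) fun ω hω => ?_
    apply ENNReal.ofReal_le_ofReal
    apply Real.exp_le_exp.2
    have h1 : δ + δ * τ k ≤ B (s + τ k) ω - B s ω := hω.2.1
    nlinarith
  have hsum : ENNReal.ofReal (Real.exp (2 * δ ^ 2)) * P (A ∩ ⋃ k, C k) ≤ P A := by
    rw [firstAt_sum P C hC hA', ← ENNReal.tsum_mul_left]
    refine ENNReal.tsum_le_of_sum_range_le fun N => ?_
    calc _ ≤ ∑ k ∈ Finset.range N, ∫⁻ ω in A ∩ firstAt C k, Z N ω ∂P := by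
          refine Finset.sum_le_sum fun k hk => ?_
          rw [← hZN k N (Finset.mem_range.1 hk).le]
          exact hlow k
      _ = ∫⁻ ω in ⋃ k ∈ Finset.range N, A ∩ firstAt C k, Z N ω ∂P := by
          rw [lintegral_biUnion_finset]
          · intro i _ j _ hij
            exact (firstAt_disj C hij).mono Set.inter_subset_right Set.inter_subset_right
          · intro k _
            exact natSigma_le hB _ _ (hF k)
      _ ≤ ∫⁻ ω in A, Z N ω ∂P := by
          apply lintegral_mono_set
          exact Set.iUnion₂_subset fun k _ => Set.inter_subset_left
      _ = P A := hZA N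
  have hU : MeasurableSet (⋃ k, C k) := MeasurableSet.iUnion hC
  have e3 := measure_inter_add_sdiff (μ := P) A hU
  have e4 : A \ (⋃ k, C k) = A ∩ {ω | ∀ k, B (s + τ k) ω - B s ω < δ + δ * τ k} := by
    ext ω
    simp only [hCdef, Set.mem_sdiff, Set.mem_inter_iff, Set.mem_iUnion, Set.mem_ofPred_eq,
      Set.mem_Ici, not_exists, not_le]
  rw [e4] at e3
  have e5 : P (A ∩ ⋃ k, C k) + P A * ENNReal.ofReal (δ ^ 2) ≤ P A := by
    have hx := exp_aux (x := 2 * δ ^ 2) (by positivity) (by nlinarith)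
    have h6 : P (A ∩ ⋃ k, C k) ≤ P A * ENNReal.ofReal (1 - δ ^ 2) := by
      calc P (A ∩ ⋃ k, C k)
          = (ENNReal.ofReal (Real.exp (2 * δ ^ 2)) * P (A ∩ ⋃ k, C k))
            * ENNReal.ofReal (Real.exp (- (2 * δ ^ 2))) := by
            rw [mul_right_comm, ← ENNReal.ofReal_mul (by positivity), ← Real.exp_add]
            simp
        _ ≤ P A * ENNReal.ofReal (1 - δ ^ 2) := by
            gcongr
            linarith
    calc _ ≤ P A * ENNReal.ofReal (1 - δ ^ 2) + P A * ENNReal.ofReal (δ ^ 2) := by gcongr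
      _ = P A := by
        rw [← mul_add, ← ENNReal.ofReal_add (by nlinarith) (by positivity)]
        simp
  nth_rw 2 [← e3] at e5
  exact (ENNReal.add_le_add_iff_left (measure_ne_top _ _)).1 e5

/-- The dyadic level-`n` event of staying below a line after time `s`. -/
def lineSet {Ω : Type*} (B : ℝ → Ω → ℝ) (s δ : ℝ) (n : ℕ) : Set Ω :=
  {ω | ∀ k : ℕ, B (s + (k : ℝ) / 2 ^ n) ω - B s ω < δ + δ * ((k : ℝ) / 2 ^ n)}

lemma line_bound {Ω : Type*} [mΩ : MeasurableSpace Ω] {P : Measure Ω} [IsProbabilityMeasure P]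
    {B : ℝ → Ω → ℝ}
    (hB : IsBrownianMotion P B) {s : ℝ} (hs : 0 ≤ s) {A : Set Ω}
    (hA : MeasurableSet[natSigma B s] A) {δ : ℝ} (hδ : 0 < δ) (hδ' : δ ≤ 1 / 4) :
    P A * ENNReal.ofReal (δ ^ 2) ≤ P (A ∩ ⋂ n, lineSet B s δ n) := by
  refine limit_inter (natSigma_le hB s _ hA) ?_ ?_ ?_
  · intro n
    have : lineSet B s δ n = ⋂ k : ℕ, {ω | B (s + (k : ℝ) / 2 ^ n) ω - B s ω
        ∈ Set.Iio (δ + δ * ((k : ℝ) / 2 ^ n))} := by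
      ext ω; simp [lineSet]
    rw [this]
    refine MeasurableSet.iInter fun k => ?_
    exact ((hB.measurable _).sub (hB.measurable s)) measurableSet_Iio
  · intro n ω h k
    rw [dyad]; exact h (2 * k)
  · intro n
    refine line_grid hB hs hA hδ hδ' (fun k => (k : ℝ) / 2 ^ n) ?_ ?_
    · intro i j hij
      dsimp only
      gcongr
    · intro k
      positivity

lemma line_path {Ω : Type*} {B : ℝ → Ω → ℝ} {s δ : ℝ} (hs : 0 ≤ s) {ω : Ω}
    (hc : ContinuousOn (fun u => B u ω) (Set.Ici 0)) (h : ω ∈ ⋂ n, lineSet B s δ n)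
    {u : ℝ} (hu : 0 ≤ u) : B (s + u) ω - B s ω ≤ δ + δ * u := by
  refine dyad_cont (g := fun u => δ + δ * u) hs hc (by fun_prop) hu fun n => ?_
  exact (Set.mem_iInter.1 h n ⌊u * 2 ^ n⌋₊).le

lemma concaveMajorant_le_line {f : ℝ → ℝ} {δ t : ℝ} (ht : 0 ≤ t)
    (h : ∀ u, 0 ≤ u → f u ≤ δ + δ * u) : concaveMajorant f t ≤ δ + δ * t := by
  unfold concaveMajorant
  apply csInf_le
  · refine ⟨f t, ?_⟩
    rintro y ⟨c, _, hc, rfl⟩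
    exact hc t ht
  · refine ⟨fun u => δ + δ * u, ?_, h, rfl⟩
    refine ⟨convex_Ici 0, ?_⟩
    intro x _ y _ a b _ _ hab
    simp only [smul_eq_mul]
    have : b = 1 - a := by linarith
    subst this
    apply le_of_eq; ring

lemma path_final {Ω : Type*} {B : ℝ → Ω → ℝ} {δ : ℝ} (hδ : 0 < δ) {ω : Ω}
    (h0 : B 0 ω = 0) (hc : ContinuousOn (fun u => B u ω) (Set.Ici 0))
    (h1 : ω ∈ ⋂ n, stepSet B 0 1 δ n) (h2 : ω ∈ ⋂ n, stepSet B 1 2 δ n)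
    (h3 : ω ∈ ⋂ n, lineSet B 2 δ n) :
    Xproc B 1 ω ≤ 10 * δ ∧ Xproc B 2 ω ≤ 10 * δ := by
  have e1 := (Set.mem_iInter.1 h1 0).1
  have e2 := (Set.mem_iInter.1 h2 0).1
  simp only [Set.mem_ofPred_eq, Set.mem_Icc] at e1 e2
  have hline : ∀ u, 0 ≤ u → B u ω ≤ δ + δ * u := by
    intro u hu
    have hp : 0 ≤ δ * u := by positivity
    rcases le_total u 1 with hu1 | hu1
    · have := step_path le_rfl hc h1 hu hu1
      rw [zero_add] at this
      linarith
    · rcases le_total u 2 with hu2 | hu2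
      · have := step_path zero_le_one hc h2 (u := u - 1) (by linarith) (by linarith)
        rw [add_sub_cancel] at this
        linarith
      · have := line_path zero_le_two hc h3 (u := u - 2) (by linarith)
        rw [add_sub_cancel] at this
        nlinarith
  have k1 := concaveMajorant_le_line (f := fun u => B u ω) zero_le_one hline
  have k2 := concaveMajorant_le_line (f := fun u => B u ω) zero_le_two hline
  unfold Xproc Kproc
  constructor <;> linarith

lemma lower_bound {Ω : Type*} [mΩ : MeasurableSpace Ω] {P : Measure Ω} [IsProbabilityMeasure P]
    {B : ℝ → Ω → ℝ} (hB : IsBrownianMotion P B) {δ : ℝ} (hδ : 0 < δ) (hδ' : δ ≤ 1 / 4) :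
    ENNReal.ofReal (4 / 25 * δ ^ 8)
      ≤ P {ω | Xproc B 1 ω ≤ 10 * δ ∧ Xproc B 2 ω ≤ 10 * δ} := by
  set G1 := ⋂ n, stepSet B 0 1 δ n with hG1
  set G2 := ⋂ n, stepSet B 1 2 δ n with hG2
  have m1 : MeasurableSet[natSigma B 1] G1 :=
    MeasurableSet.iInter fun n => stepSet_meas B le_rfl (by norm_num) δ n
  have m2 : MeasurableSet[natSigma B 2] G2 :=
    MeasurableSet.iInter fun n => stepSet_meas B zero_le_one (by norm_num) δ n
  have b1 := step_bound hB (s := 0) (t := 1) le_rfl (by norm_num)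
    (@MeasurableSet.univ _ (natSigma B 0)) hδ hδ'
  rw [Set.univ_inter, measure_univ, one_mul] at b1
  have b2 := step_bound hB (s := 1) (t := 2) zero_le_one (by norm_num) m1 hδ hδ'
  have b3 := line_bound hB (s := 2) zero_le_two
    (MeasurableSet.inter (natSigma_mono B one_le_two _ m1) m2) hδ hδ'
  calc ENNReal.ofReal (4 / 25 * δ ^ 8)
      = ENNReal.ofReal (2 / 5 * δ ^ 3) * ENNReal.ofReal (2 / 5 * δ ^ 3)
        * ENNReal.ofReal (δ ^ 2) := by
        rw [← ENNReal.ofReal_mul (by positivity), ← ENNReal.ofReal_mul (by positivity)]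
        congr 1; ring
    _ ≤ P G1 * ENNReal.ofReal (2 / 5 * δ ^ 3) * ENNReal.ofReal (δ ^ 2) := by gcongr
    _ ≤ P (G1 ∩ G2) * ENNReal.ofReal (δ ^ 2) := by gcongr
    _ ≤ _ := b3
    _ ≤ _ := by
        apply measure_mono_ae
        filter_upwards [hB.init, hB.cont] with ω h0 hc
        rintro ⟨⟨h1, h2⟩, h3⟩
        exact path_final hδ h0 hc h1 h2 h3

lemma upper_one {Ω : Type*} [mΩ : MeasurableSpace Ω] {P : Measure Ω} [IsProbabilityMeasure P]
    {B : ℝ → Ω → ℝ} (hB : IsBrownianMotion P B) {ε : ℝ} (hε : 0 < ε) :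
    P {ω | |B 1 ω| ≤ ε ∧ |B 2 ω| ≤ ε} ≤ ENNReal.ofReal (8 * ε ^ 2) := by
  have hone : Real.toNNReal ((1:ℝ) - 0) = 1 := by simp
  have htwo : Real.toNNReal ((2:ℝ) - 1) = 1 := by norm_num
  have hm : MeasurableSet[natSigma B 1] {ω | B 1 ω - B 0 ω ∈ Set.Icc (-ε) ε} :=
    (Measurable.sub (measurable_natSigma B zero_le_one le_rfl)
      (measurable_natSigma B le_rfl zero_le_one)) measurableSet_Icc
  have h1 := indep_apply hB (s := 0) (t := 1) le_rfl zero_le_one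
    (@MeasurableSet.univ _ (natSigma B 0)) (S := Set.Icc (-ε) ε) measurableSet_Icc
  have h2 := indep_apply hB (s := 1) (t := 2) zero_le_one one_le_two hm
    (S := Set.Icc (-(2 * ε)) (2 * ε)) measurableSet_Icc
  rw [Set.univ_inter, measure_univ, one_mul, hone] at h1
  rw [h1, htwo] at h2
  calc _ ≤ P ({ω | B 1 ω - B 0 ω ∈ Set.Icc (-ε) ε} ∩
          {ω | B 2 ω - B 1 ω ∈ Set.Icc (-(2 * ε)) (2 * ε)}) := by
        apply measure_mono_ae
        filter_upwards [hB.init] with ω h0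
        rintro ⟨ha, hb⟩
        rw [abs_le] at ha hb
        refine ⟨⟨?_, ?_⟩, ?_, ?_⟩ <;> linarith
    _ ≤ volume (Set.Icc (-ε) ε) * volume (Set.Icc (-(2 * ε)) (2 * ε)) := by
        rw [h2]
        exact mul_le_mul' (gauss_le_vol _) (gauss_le_vol _)
    _ = _ := by
        rw [Real.volume_Icc, Real.volume_Icc, ← ENNReal.ofReal_mul (by linarith)]
        congr 1; ring

lemma upper_bound {Ω : Type*} [mΩ : MeasurableSpace Ω] {P : Measure Ω} [IsProbabilityMeasure P]
    {W : ℝ → Ω → EuclideanSpace ℝ (Fin 5)} (hW : IsBrownianMotionND P W) {ε : ℝ} (hε : 0 < ε) :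
    P {ω | ‖W 1 ω‖ ≤ ε ∧ ‖W 2 ω‖ ≤ ε} ≤ ENNReal.ofReal ((8 * ε ^ 2) ^ 5) := by
  have hmeas : ∀ (i : Fin 5) (t : ℝ), 0 ≤ t →
      Measurable[procSigma (fun t ω => W t ω i)] (fun ω => W t ω i) := by
    intro i t ht
    apply measurable_iff_comap_le.2
    exact le_iSup (fun u : Set.Ici (0 : ℝ) =>
      MeasurableSpace.comap (fun ω => W u ω i) inferInstance) ⟨t, ht⟩
  have h := hW.2.meas_iInter (s := fun i => {ω | |W 1 ω i| ≤ ε ∧ |W 2 ω i| ≤ ε}) (by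
    intro i
    have e : {ω | |W 1 ω i| ≤ ε ∧ |W 2 ω i| ≤ ε}
        = (fun ω => W 1 ω i) ⁻¹' (Set.Icc (-ε) ε) ∩ (fun ω => W 2 ω i) ⁻¹' (Set.Icc (-ε) ε) := by
      ext ω; simp [abs_le]
    rw [e]
    exact MeasurableSet.inter (hmeas i 1 zero_le_one measurableSet_Icc)
      (hmeas i 2 zero_le_two measurableSet_Icc))
  calc _ ≤ P (⋂ i, {ω | |W 1 ω i| ≤ ε ∧ |W 2 ω i| ≤ ε}) := by
        apply measure_mono
        rintro ω ⟨h1, h2⟩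
        refine Set.mem_iInter.2 fun i => ⟨?_, ?_⟩
        · exact (PiLp.norm_apply_le (W 1 ω) i).trans h1
        · exact (PiLp.norm_apply_le (W 2 ω) i).trans h2
    _ ≤ ∏ i : Fin 5, ENNReal.ofReal (8 * ε ^ 2) := by
        rw [h]
        exact Finset.prod_le_prod' fun i _ => upper_one (hW.1 i) hε
    _ = _ := by
        rw [Finset.prod_const, Finset.card_univ, Fintype.card_fin,
          ENNReal.ofReal_pow (by positivity)]

end Helpers

/-- `X = 2K - B` does not have the law of the BES(5) process: some
finite-dimensional distribution of `X` differs from that of the radial part of a standard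
5-dimensional Brownian motion started at the origin. -/
theorem two_K_sub_B_not_BES5 {Ω Ω' : Type*} [MeasurableSpace Ω] [MeasurableSpace Ω']
    (P : Measure Ω) [IsProbabilityMeasure P] (B : ℝ → Ω → ℝ) (hB : IsBrownianMotion P B)
    (P' : Measure Ω') [IsProbabilityMeasure P']
    (W : ℝ → Ω' → EuclideanSpace ℝ (Fin 5)) (hW : IsBrownianMotionND P' W) :
    ∃ (m : ℕ) (ts : Fin m → ℝ), StrictMono ts ∧ (∀ i, 0 < ts i) ∧
      P.map (fun ω (i : Fin m) => Xproc B (ts i) ω)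
        ≠ P'.map (fun ω (i : Fin m) => ‖W (ts i) ω‖) := by
  by_contra hcon
  push Not at hcon
  have heq := hcon 2 ![1, 2] (by
    intro i j hij
    fin_cases i <;> fin_cases j <;> simp_all) (by
    intro i; fin_cases i <;> simp)
  have hWm : Measurable (fun ω (i : Fin 2) => ‖W ((![1, 2] : Fin 2 → ℝ) i) ω‖) := by
    refine measurable_pi_lambda _ fun i => ?_
    simp_rw [EuclideanSpace.norm_eq]
    refine Measurable.sqrt (Finset.measurable_sum _ fun j _ => ?_)
    exact ((hW.1 j).measurable _).norm.pow_const 2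
  have hXm : AEMeasurable (fun ω (i : Fin 2) => Xproc B ((![1, 2] : Fin 2 → ℝ) i) ω) P := by
    have := Measure.isProbabilityMeasure_map (μ := P') hWm.aemeasurable
    apply aemeasurable_of_map_neZero
    rw [heq]
    infer_instance
  set δ : ℝ := 1 / 10 ^ 8 with hδ
  set S : Set (Fin 2 → ℝ) := {x | x 0 ≤ 10 * δ ∧ x 1 ≤ 10 * δ} with hS
  have hSm : MeasurableSet S :=
    (measurableSet_le (measurable_pi_apply 0) measurable_const).inter
      (measurableSet_le (measurable_pi_apply 1) measurable_const)
  have h1 := congrArg (fun μ => μ S) heq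
  simp only [Measure.map_apply_of_aemeasurable hXm hSm, Measure.map_apply hWm hSm] at h1
  have hlo := lower_bound hB (δ := δ) (by positivity) (by norm_num [hδ])
  have hup := upper_bound hW (ε := 10 * δ) (by positivity)
  have h2 : ENNReal.ofReal (4 / 25 * δ ^ 8)
      ≤ ENNReal.ofReal ((8 * (10 * δ) ^ 2) ^ 5) := (hlo.trans (le_of_eq h1)).trans hup
  rw [ENNReal.ofReal_le_ofReal_iff (by positivity)] at h2
  norm_num [hδ] at h2
end
end

section
/- Neither the ℝ²-valued process (K(t), B(t))_{t≥0} nor the ℝ²-valued process (K'(t), B(t))_{t≥0} is Markov. -/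
open MeasureTheory ProbabilityTheory Set Filter Topology
open scoped Classical

noncomputable section

open scoped NNReal ENNReal

lemma bm_hasIndepIncrements {Ω : Type*} [MeasurableSpace Ω] {P : Measure Ω}
    [IsProbabilityMeasure P] {B : ℝ → Ω → ℝ} (hB : IsBrownianMotion P B) :
    HasIndepIncrements (fun (t : ℝ≥0) ω => B t ω) P := by
  refine HasIndepIncrements.of_nat fun t ht _ => ?_
  rw [iIndepFun_iff_measure_inter_preimage_eq_mul]
  intro S
  induction S using Finset.induction_on_max with
  | empty => intro sets _; simp
  | insert a s has ih =>
    intro sets hs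
    have hnot : a ∉ s := fun h => lt_irrefl _ (has a h)
    rw [Finset.prod_insert hnot, ← ih (fun i hi => hs i (Finset.mem_insert_of_mem hi)),
      Finset.set_biInter_insert]
    have h1 := hB.incr_indep (t a) (t (a+1)) (t a).2 (by exact_mod_cast ht (Nat.le_succ a))
    rw [Indep_iff] at h1
    apply h1
    · exact ⟨sets a, hs a (by simp), rfl⟩
    · refine Finset.measurableSet_biInter (m := natSigma B (t a)) _ fun i hi => ?_
      have key : ∀ k ≤ a, Measurable[natSigma B (t a)] (B (t k)) := by
        intro k hk
        have : MeasurableSpace.comap (B (t k)) inferInstance ≤ natSigma B (t a) :=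
          le_iSup (fun u : Set.Icc (0:ℝ) (t a) => MeasurableSpace.comap (B u) inferInstance)
            ⟨(t k : ℝ), (t k).2, by exact_mod_cast ht hk⟩
        exact measurable_iff_comap_le.2 this
      have h2 : Measurable[natSigma B (t a)] (fun ω => B (t (i+1)) ω - B (t i) ω) :=
        (key _ (has i hi)).sub (key _ (has i hi).le)
      exact h2 (hs i (Finset.mem_insert_of_mem hi))

lemma bm_isBrownianReal {Ω : Type*} [MeasurableSpace Ω] {P : Measure Ω}
    [IsProbabilityMeasure P] {B : ℝ → Ω → ℝ} (hB : IsBrownianMotion P B) :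
    IsBrownianReal (fun (t : ℝ≥0) ω => B t ω) P where
  toIsPreBrownianReal := by
    refine HasIndepIncrements.isPreBrownianReal_of_hasLaw (fun t => ?_)
      (bm_hasIndepIncrements hB)
    refine ⟨(hB.measurable t).aemeasurable, ?_⟩
    have h := hB.incr_law 0 t le_rfl t.2
    simp only [sub_zero, Real.toNNReal_coe] at h
    rw [← h]
    refine Measure.map_congr ?_
    filter_upwards [hB.init] with ω hω
    simp [hω]
  cont := by
    filter_upwards [hB.cont] with ω hω
    exact hω.comp_continuous NNReal.continuous_coe (fun t => t.2)

/-- The bridge remainder is independent of the value at time `r`. -/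
lemma bridge_indep {Ω : Type*} [MeasurableSpace Ω] {P : Measure Ω}
    [IsProbabilityMeasure P] {X : ℝ≥0 → Ω → ℝ} (hX : IsPreBrownianReal X P) (r : ℝ≥0)
    (hr : 0 < r) :
    IndepFun (fun ω (t : ℝ≥0) => X t ω - ((min t r : ℝ≥0) : ℝ) / r * X r ω)
      (fun ω (_ : Unit) => X r ω) P := by
  have mX t := hX.aemeasurable t
  apply IsGaussianProcess.indepFun_of_covariance_eq_zero
  · apply hX.isGaussianProcess.of_isGaussianProcess
    rintro (t | t)
    · exact ⟨{t, r},
        { toFun x := x ⟨t, by simp⟩ - ((min t r : ℝ≥0) : ℝ) / r * x ⟨r, by simp⟩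
          map_add' x y := by simp; ring
          map_smul' c x := by simp; ring }, by simp⟩
    · exact ⟨{r},
        { toFun x := x ⟨r, by simp⟩
          map_add' x y := by simp
          map_smul' c x := by simp }, by simp⟩
  any_goals fun_prop
  · rintro s t
    have hm : ∀ t, MemLp (X t) 2 P := fun t => (hX.isGaussianProcess.hasGaussianLaw_eval _).memLp_two
    rw [covariance_fun_sub_left (hm _) ((hm _).const_mul _) (hm _), covariance_const_mul_left,
      hX.covariance_eval, hX.covariance_eval]
    simp only [min_self]
    have : (r:ℝ) ≠ 0 := by positivity
    field_simp
    simp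

/-- Quasi-invariance of the law of Brownian motion under one elementary shift. -/
lemma shift_ac {Ω : Type*} [MeasurableSpace Ω] {P : Measure Ω}
    [IsProbabilityMeasure P] {X : ℝ≥0 → Ω → ℝ} (hX : IsPreBrownianReal X P)
    (mX : ∀ t, Measurable (X t)) (r : ℝ≥0) (hr : 0 < r) (c : ℝ) :
    (P.map (fun ω t => X t ω)).map (fun f t => f t + c * ((min t r : ℝ≥0) : ℝ)) ≪
      P.map (fun ω t => X t ω) := by
  have mXf : Measurable (fun ω t => X t ω) := measurable_pi_lambda _ mX
  set R : Ω → (ℝ≥0 → ℝ) := fun ω t => X t ω - ((min t r : ℝ≥0) : ℝ) / r * X r ω with hR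
  have mR : Measurable R := measurable_pi_lambda _ fun t => (mX t).sub ((mX r).const_mul _)
  have mS : Measurable (fun (f : ℝ≥0 → ℝ) t => f t + c * ((min t r : ℝ≥0) : ℝ)) :=
    measurable_pi_lambda _ fun t => (measurable_pi_apply t).add_const _
  have hind : IndepFun R (X r) P := by
    have h5 : Measurable (fun g : Unit → ℝ => g ()) := measurable_pi_apply _
    exact (bridge_indep hX r hr).comp (φ := id) (ψ := fun g : Unit → ℝ => g ()) measurable_id h5
  have hprod := (indepFun_iff_map_prod_eq_prod_map_map mR.aemeasurable (mX r).aemeasurable).1 hind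
  rw [(hX.hasLaw_eval r).map_eq] at hprod
  let G : ℝ → (ℝ≥0 → ℝ) × ℝ → (ℝ≥0 → ℝ) := fun d p t => p.1 t + ((min t r : ℝ≥0) : ℝ) / r * p.2
    + d * ((min t r : ℝ≥0) : ℝ)
  have mG : ∀ d, Measurable (G d) := fun d => measurable_pi_lambda _ fun t => by fun_prop
  have e0 : P.map (fun ω t => X t ω) = ((P.map R).prod (gaussianReal 0 r)).map (G 0) := by
    rw [← hprod, Measure.map_map (mG 0) (mR.prodMk (mX r))]
    congr 1
    ext ω t
    simp [G, hR]
  have e1 : (P.map (fun ω t => X t ω)).map (fun f t => f t + c * ((min t r : ℝ≥0) : ℝ))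
      = ((P.map R).prod (gaussianReal (c * r) r)).map (G 0) := by
    have : gaussianReal (c * r) r = (gaussianReal 0 r).map (· + c * r) := by
      rw [gaussianReal_map_add_const]; simp
    have := Measure.isProbabilityMeasure_map (μ := P) mR.aemeasurable
    rw [e0, ‹gaussianReal (c * r) r = _›, Measure.map_map mS (mG 0)]
    have h3 : (P.map R).prod ((gaussianReal 0 r).map (· + c * (r:ℝ))) =
      ((P.map R).prod (gaussianReal 0 r)).map (Prod.map id (· + c * (r:ℝ))) := by
      rw [← Measure.map_prod_map _ _ measurable_id (by fun_prop), Measure.map_id]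
    rw [h3, Measure.map_map (mG 0) (by fun_prop)]
    congr 1
    ext p t
    have : (r:ℝ) ≠ 0 := by positivity
    simp [G]
    field_simp
    ring
  rw [e1, e0]
  refine Measure.AbsolutelyContinuous.map ?_ (mG 0)
  refine Measure.AbsolutelyContinuous.prod .rfl ?_
  exact (gaussianReal_absolutelyContinuous _ hr.ne').trans
    (gaussianReal_absolutelyContinuous' _ hr.ne')

/-- Shifts by finite combinations of `min t r`. -/
def shiftFun (l : List (ℝ≥0 × ℝ)) (t : ℝ≥0) : ℝ :=
  (l.map fun p => p.2 * ((min t p.1 : ℝ≥0) : ℝ)).sum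

lemma shift_ac_list {Ω : Type*} [MeasurableSpace Ω] {P : Measure Ω}
    [IsProbabilityMeasure P] {X : ℝ≥0 → Ω → ℝ} (hX : IsPreBrownianReal X P)
    (mX : ∀ t, Measurable (X t)) (l : List (ℝ≥0 × ℝ)) (hl : ∀ p ∈ l, 0 < p.1) :
    (P.map (fun ω t => X t ω)).map (fun f t => f t + shiftFun l t) ≪
      P.map (fun ω t => X t ω) := by
  induction l with
  | nil =>
    simp only [shiftFun, List.map_nil, List.sum_nil, add_zero]
    exact (Measure.map_id (μ := P.map (fun ω t => X t ω))).absolutelyContinuous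
  | cons p l ih =>
    have h1 := shift_ac hX mX p.1 (hl p (by simp)) p.2
    have h2 := ih fun q hq => hl q (by simp [hq])
    have m1 : Measurable (fun (f : ℝ≥0 → ℝ) t => f t + p.2 * ((min t p.1 : ℝ≥0) : ℝ)) :=
      measurable_pi_lambda _ fun t => (measurable_pi_apply t).add_const _
    have m2 : Measurable (fun (f : ℝ≥0 → ℝ) t => f t + shiftFun l t) :=
      measurable_pi_lambda _ fun t => (measurable_pi_apply t).add_const _
    have h3 := (h1.map m2).trans h2
    rw [Measure.map_map m2 m1] at h3
    convert h3 using 2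
    ext f t
    simp [shiftFun, add_assoc]

/-- Nonnegative rational times. -/
def rq (q : ℚ) : ℝ≥0 := Real.toNNReal (q : ℝ)

lemma rq_dense : DenseRange rq := by
  refine dense_of_exists_between fun a b hab => ?_
  obtain ⟨q, h0, h1, h2⟩ := (NNReal.lt_iff_exists_rat_btwn a b).1 hab
  exact ⟨rq q, ⟨q, rfl⟩, h1, h2⟩

/-- a.s. linear growth -/
lemma bm_growth {Ω : Type*} [MeasurableSpace Ω] {P : Measure Ω}
    [IsProbabilityMeasure P] {B : ℝ → Ω → ℝ} (hB : IsBrownianMotion P B) :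
    ∀ᵐ ω ∂P, ∃ M : ℕ, ∀ u : ℝ, 0 ≤ u → |B u ω| ≤ M * (1 + u) := by
  have hX := bm_isBrownianReal hB
  have hY := hX.toIsPreBrownianReal.inv
  have mX : Measurable (fun ω (t : ℝ≥0) => B t ω) := measurable_pi_lambda _ fun t => hB.measurable t
  have mY : Measurable (fun ω (t : ℝ≥0) => (t:ℝ) * B (1 / t : ℝ≥0) ω) :=
    measurable_pi_lambda _ fun t => (hB.measurable _).const_mul _
  have hlaw : P.map (fun ω (t : ℝ≥0) => B t ω)
      = P.map (fun ω (t : ℝ≥0) => (t:ℝ) * B (1 / t : ℝ≥0) ω) := by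
    refine (map_eq_iff_forall_finset_map_restrict_eq (X := fun (t : ℝ≥0) ω => B t ω)
      (Y := fun (t : ℝ≥0) ω => (t:ℝ) * B (1 / t : ℝ≥0) ω)
      mX.aemeasurable mY.aemeasurable).2 fun I => ?_
    rw [(hX.hasLaw I).map_eq, (hY.hasLaw I).map_eq]
  let S : Set (ℝ≥0 → ℝ) := {f | ∃ M : ℕ, ∀ q : ℚ, rq q ≤ 1 → |f (rq q)| ≤ M}
  have mS : MeasurableSet S := by
    have : S = ⋃ M : ℕ, ⋂ q : ℚ, ⋂ _ : rq q ≤ 1, {f : ℝ≥0 → ℝ | |f (rq q)| ≤ M} := by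
      ext f; simp [S]
    rw [this]
    refine MeasurableSet.iUnion fun M => MeasurableSet.iInter fun q => MeasurableSet.iInter fun _ => ?_
    exact measurableSet_le (measurable_pi_apply _).abs measurable_const
  have h1 : ∀ᵐ ω ∂P, (fun t : ℝ≥0 => B t ω) ∈ S := by
    filter_upwards [hX.cont] with ω hω
    obtain ⟨C, hC⟩ := (isCompact_Icc (a := (0:ℝ≥0)) (b := 1)).exists_bound_of_continuousOn
      hω.continuousOn
    obtain ⟨M, hM⟩ := exists_nat_ge C
    exact ⟨M, fun q hq => (hC (rq q) ⟨zero_le, hq⟩).trans hM⟩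
  have h2 : ∀ᵐ ω ∂P, (fun t : ℝ≥0 => (t:ℝ) * B (1 / t : ℝ≥0) ω) ∈ S := by
    have : ∀ᵐ f ∂(P.map (fun ω (t : ℝ≥0) => B t ω)), f ∈ S := (ae_map_iff mX.aemeasurable mS).2 h1
    rw [hlaw] at this
    exact (ae_map_iff mY.aemeasurable mS).1 this
  filter_upwards [h1, h2, hX.cont] with ω ⟨M₁, h1⟩ ⟨M₂, h2⟩ hc
  refine ⟨M₁ + M₂, fun u hu => ?_⟩
  lift u to ℝ≥0 using hu
  refine rq_dense.induction_on (p := fun u : ℝ≥0 => |B u ω| ≤ ((M₁ + M₂ : ℕ) : ℝ) * (1 + u)) u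
    ?_ ?_
  · exact isClosed_le hc.abs (by fun_prop)
  · intro q
    push_cast
    have hM1 : (0:ℝ) ≤ M₁ := Nat.cast_nonneg _
    have hM2 : (0:ℝ) ≤ M₂ := Nat.cast_nonneg _
    have hq0 : (0:ℝ) ≤ rq q := NNReal.coe_nonneg _
    rcases le_or_gt (rq q) 1 with hq | hq
    · have := h1 q hq
      nlinarith [mul_nonneg hM1 hq0, mul_nonneg hM2 hq0]
    · have hq' : (1:ℝ) < rq q := by exact_mod_cast hq
      have hinv : rq (q⁻¹) = (rq q)⁻¹ := by
        simp [rq, Real.toNNReal_inv]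
      have := h2 (q⁻¹) (by rw [hinv]; exact inv_le_one_of_one_le₀ hq.le)
      simp only [hinv, one_div, inv_inv, NNReal.coe_inv, abs_mul, abs_inv, abs_of_nonneg hq0] at this
      rw [inv_mul_le_iff₀ (by positivity)] at this
      nlinarith [mul_nonneg hM1 hq0]

/-! ### Deterministic facts on concave majorants -/

lemma cm_le {f c : ℝ → ℝ} (hc : ConcaveOn ℝ (Set.Ici 0) c) (hf : ∀ u, 0 ≤ u → f u ≤ c u)
    {t : ℝ} (ht : 0 ≤ t) : concaveMajorant f t ≤ c t := by
  refine csInf_le ⟨f t, ?_⟩ ⟨c, hc, hf, rfl⟩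
  rintro y ⟨d, -, hd, rfl⟩
  exact hd t ht

lemma le_cm {f c : ℝ → ℝ} (hc : ConcaveOn ℝ (Set.Ici 0) c) (hf : ∀ u, 0 ≤ u → f u ≤ c u)
    {t : ℝ} (ht : 0 ≤ t) : f t ≤ concaveMajorant f t := by
  refine le_csInf ⟨c t, c, hc, hf, rfl⟩ ?_
  rintro y ⟨d, -, hd, rfl⟩
  exact hd t ht

lemma cm_concave {f c : ℝ → ℝ} (hc : ConcaveOn ℝ (Set.Ici 0) c) (hf : ∀ u, 0 ≤ u → f u ≤ c u) :
    ConcaveOn ℝ (Set.Ici 0) (concaveMajorant f) := by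
  refine ⟨convex_Ici 0, fun x hx y hy a b ha hb hab => ?_⟩
  refine le_csInf ⟨_, c, hc, hf, rfl⟩ ?_
  rintro z ⟨d, hd, hfd, rfl⟩
  refine le_trans ?_ (hd.2 hx hy ha hb hab)
  have h1 := cm_le hd hfd hx
  have h2 := cm_le hd hfd hy
  simp only [smul_eq_mul]
  gcongr

lemma cm_congr {f g : ℝ → ℝ} (h : ∀ u, 0 ≤ u → f u = g u) :
    concaveMajorant f = concaveMajorant g := by
  funext t
  unfold concaveMajorant
  congr 1
  ext y
  constructor
  · rintro ⟨c, h1, h2, h3⟩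
    exact ⟨c, h1, fun u hu => h u hu ▸ h2 u hu, h3⟩
  · rintro ⟨c, h1, h2, h3⟩
    exact ⟨c, h1, fun u hu => (h u hu).symm ▸ h2 u hu, h3⟩

lemma line_concave (c m s : ℝ) : ConcaveOn ℝ (Set.Ici 0) (fun u : ℝ => c + m * (u - s)) := by
  refine ⟨convex_Ici 0, fun x _ y _ a b _ _ hab => ?_⟩
  simp only [smul_eq_mul]
  have : b = 1 - a := by linarith
  subst this
  apply le_of_eq
  ring

lemma cm_line {f : ℝ → ℝ} {c m s α β : ℝ} (hf : ∀ u, 0 ≤ u → f u ≤ c + m * (u - s))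
    (h0 : 0 ≤ α) (hαβ : α < β) (hα : f α = c + m * (α - s)) (hβ : f β = c + m * (β - s))
    {u : ℝ} (h1 : α ≤ u) (h2 : u ≤ β) : concaveMajorant f u = c + m * (u - s) := by
  have hl := line_concave c m s
  refine le_antisymm (cm_le hl hf (h0.trans h1)) ?_
  have hK := cm_concave hl hf
  have hβ0 : 0 ≤ β := h0.trans hαβ.le
  have ha := le_cm hl hf h0
  have hb := le_cm hl hf hβ0
  have hne : β - α ≠ 0 := by linarith
  have hp1 : 0 ≤ (β - u) / (β - α) := div_nonneg (by linarith) (by linarith)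
  have hp2 : 0 ≤ (u - α) / (β - α) := div_nonneg (by linarith) (by linarith)
  have hsum : (β - u) / (β - α) + (u - α) / (β - α) = 1 := by
    field_simp; ring
  have h := hK.2 (show α ∈ Set.Ici (0:ℝ) from h0) (show β ∈ Set.Ici (0:ℝ) from hβ0) hp1 hp2 hsum
  simp only [smul_eq_mul] at h
  have e : (β - u) / (β - α) * α + (u - α) / (β - α) * β = u := by
    field_simp; ring
  rw [e] at h
  refine le_trans ?_ h
  have : c + m * (u - s) = (β - u) / (β - α) * f α + (u - α) / (β - α) * f β := by
    rw [hα, hβ]; field_simp; ring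
  rw [this]
  gcongr

lemma concave_hasDeriv {c : ℝ → ℝ} (hc : ConcaveOn ℝ (Set.Ici 0) c) {s : ℝ} (hs : 0 < s) :
    HasDerivWithinAt c (derivWithin c (Set.Ioi s) s) (Set.Ioi s) s := by
  have := hc.neg.differentiableWithinAt_Ioi_of_mem_interior (x := s) (by simpa using hs)
  have h2 : DifferentiableWithinAt ℝ c (Set.Ioi s) s := by
    simpa using this.neg
  exact h2.hasDerivWithinAt

lemma concave_supergradient {c : ℝ → ℝ} (hc : ConcaveOn ℝ (Set.Ici 0) c) {s : ℝ} (hs : 0 < s)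
    {u : ℝ} (hu : 0 ≤ u) : c u ≤ c s + rightDeriv c s * (u - s) := by
  have hd := concave_hasDeriv hc hs
  change HasDerivWithinAt c (rightDeriv c s) (Set.Ioi s) s at hd
  rcases lt_trichotomy u s with h | rfl | h
  · -- slopes to the right are at most the slope on the left
    have key : ∀ v ∈ Set.Ioi s, slope c s v ≤ slope c u s := by
      intro v hv
      have := hc.slope_anti_adjacent (x := u) (y := s) (z := v) hu (hs.le.trans hv.le) h hv
      simpa [slope_def_field] using this
    have ht : Tendsto (slope c s) (𝓝[>] s) (𝓝 (rightDeriv c s)) := by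
      have := hasDerivWithinAt_iff_tendsto_slope.1 hd
      simpa using this
    have h1 : rightDeriv c s ≤ slope c u s :=
      le_of_tendsto ht (by filter_upwards [self_mem_nhdsWithin] with v hv using key v hv)
    rw [slope_def_field, le_div_iff₀ (by linarith)] at h1
    linarith
  · simp
  · have h1 := hc.slope_le_of_hasDerivWithinAt_Ioi (x := s) (y := u) hs.le hu h hd
    rw [slope_def_field, div_le_iff₀ (by linarith)] at h1
    linarith

/-- Measurable version of the concave majorant. -/
def Kt (s : ℝ) (F : ℝ≥0 → ℝ) : ℝ :=
  (⨅ m : ℚ, ⨆ q : ℚ, ((F (rq q) - m * ((rq q : ℝ) - s) : ℝ) : EReal)).toReal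

lemma measurable_Kt (s : ℝ) : Measurable (Kt s) := by
  unfold Kt
  refine measurable_ereal_toReal.comp (Measurable.iInf fun m => Measurable.iSup fun q => ?_)
  exact measurable_coe_real_ereal.comp ((measurable_pi_apply _).sub_const _)

/-- extension of a path to the real line -/
def pext (F : ℝ≥0 → ℝ) (u : ℝ) : ℝ := F u.toNNReal

/-- Good paths: continuous, with linear growth. -/
def Good (F : ℝ≥0 → ℝ) : Prop := Continuous F ∧ ∃ M : ℝ, ∀ u : ℝ≥0, F u ≤ M * (1 + u)

lemma Good.majorant {F : ℝ≥0 → ℝ} (h : Good F) :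
    ∃ c : ℝ → ℝ, ConcaveOn ℝ (Set.Ici 0) c ∧ ∀ u, 0 ≤ u → pext F u ≤ c u := by
  obtain ⟨M, hM⟩ := h.2
  refine ⟨_, line_concave M M 0, fun u hu => ?_⟩
  have := hM u.toNNReal
  rw [Real.coe_toNNReal u hu] at this
  simp only [pext]
  linarith

lemma Good.Kt_eq {F : ℝ≥0 → ℝ} (h : Good F) {s : ℝ} (hs : 0 < s) :
    Kt s F = concaveMajorant (pext F) s := by
  obtain ⟨c, hc, hfc⟩ := h.majorant
  have hK := cm_concave hc hfc
  have hle : ∀ u, 0 ≤ u → pext F u ≤ concaveMajorant (pext F) u := fun u hu => le_cm hc hfc hu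
  set k := concaveMajorant (pext F) s with hk
  suffices h : (⨅ m : ℚ, ⨆ q : ℚ, ((F (rq q) - m * ((rq q : ℝ) - s) : ℝ) : EReal)) = (k : EReal) by
    rw [Kt, h, EReal.toReal_coe]
  apply le_antisymm
  · refine EReal.le_of_forall_lt_iff_le.1 fun y hy => ?_
    have hy' : k < y := by exact_mod_cast hy
    set m₀ := rightDeriv (concaveMajorant (pext F)) s
    obtain ⟨m, hm1, hm2⟩ := exists_rat_btwn (show m₀ < m₀ + (y - k) / s by
      have : 0 < (y - k) / s := div_pos (by linarith) hs
      linarith)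
    refine (iInf_le _ m).trans (iSup_le fun q => ?_)
    rw [EReal.coe_le_coe_iff]
    have h1 := hle (rq q) (rq q).2
    have h2 := concave_supergradient hK hs (rq q).2
    have h3 : pext F (rq q) = F (rq q) := by simp [pext]
    rw [h3] at h1
    have h4 : ((m:ℝ) - m₀) * s ≤ y - k := by
      rw [← le_div_iff₀ hs]; linarith
    have h5 : 0 ≤ ((m:ℝ) - m₀) * (rq q : ℝ) := mul_nonneg (by linarith) (rq q).2
    change concaveMajorant (pext F) (rq q) ≤ k + m₀ * ((rq q : ℝ) - s) at h2
    nlinarith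
  · refine le_iInf fun m => ?_
    by_contra hlt
    push Not at hlt
    obtain ⟨y, hy1, hy2⟩ := EReal.lt_iff_exists_real_btwn.1 hlt
    have hyk : y < k := by exact_mod_cast hy2
    have hq : ∀ q : ℚ, F (rq q) ≤ y + m * ((rq q : ℝ) - s) := by
      intro q
      have : ((F (rq q) - m * ((rq q : ℝ) - s) : ℝ) : EReal) < y :=
        (le_iSup (fun q : ℚ => ((F (rq q) - m * ((rq q : ℝ) - s) : ℝ) : EReal)) q).trans_lt hy1
      have : F (rq q) - m * ((rq q : ℝ) - s) < y := by exact_mod_cast this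
      linarith
    have hall : ∀ u : ℝ≥0, F u ≤ y + m * ((u : ℝ) - s) := by
      intro u
      refine rq_dense.induction_on (p := fun u : ℝ≥0 => F u ≤ y + m * ((u : ℝ) - s)) u ?_ hq
      exact isClosed_le h.1 (by fun_prop)
    have := cm_le (f := pext F) (line_concave y m s) (fun u hu => by
      have := hall u.toNNReal
      rwa [Real.coe_toNNReal u hu] at this) hs.le
    simp only [sub_self, mul_zero, add_zero] at this
    linarith

/-- measurable version of the slope -/
def kt (s : ℝ) (F : ℝ≥0 → ℝ) : ℝ :=
  (limsup (fun n : ℕ => (((n + 1 : ℝ) * (Kt (s + 1 / (n + 1 : ℝ)) F - Kt s F) : ℝ) : EReal)) atTop).toReal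

lemma measurable_kt (s : ℝ) : Measurable (kt s) := by
  unfold kt
  refine measurable_ereal_toReal.comp (Measurable.limsup fun n => ?_)
  exact measurable_coe_real_ereal.comp
    (((measurable_Kt _).sub (measurable_Kt _)).const_mul _)

lemma Good.kt_eq {F : ℝ≥0 → ℝ} (h : Good F) {s : ℝ} (hs : 0 < s) :
    kt s F = rightDeriv (concaveMajorant (pext F)) s := by
  obtain ⟨c, hc, hfc⟩ := h.majorant
  have hK := cm_concave hc hfc
  have hd := concave_hasDeriv hK hs
  change HasDerivWithinAt _ (rightDeriv _ s) _ _ at hd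
  have ht : Tendsto (slope (concaveMajorant (pext F)) s) (𝓝[>] s)
      (𝓝 (rightDeriv (concaveMajorant (pext F)) s)) := by
    have := hasDerivWithinAt_iff_tendsto_slope.1 hd
    simpa using this
  have hseq : Tendsto (fun n : ℕ => s + 1 / (n + 1 : ℝ)) atTop (𝓝[>] s) := by
    refine tendsto_nhdsWithin_iff.2 ⟨?_, Eventually.of_forall fun n => ?_⟩
    · simpa using (tendsto_const_nhds (x := s)).add tendsto_one_div_add_atTop_nhds_zero_nat
    · simp only [Set.mem_Ioi, lt_add_iff_pos_right]; positivity
  have h2 := ht.comp hseq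
  have h3 : Tendsto (fun n : ℕ => (n + 1 : ℝ) * (Kt (s + 1 / (n + 1 : ℝ)) F - Kt s F)) atTop
      (𝓝 (rightDeriv (concaveMajorant (pext F)) s)) := by
    refine h2.congr fun n => ?_
    simp only [Function.comp, slope_def_field]
    rw [h.Kt_eq hs, h.Kt_eq (by positivity)]
    field_simp
    simp
  have h4 := (continuous_coe_real_ereal.tendsto _).comp h3
  unfold kt
  have h5 := h4.limsup_eq
  simp only [Function.comp_def] at h5
  rw [h5, EReal.toReal_coe]

/-- Key bound: the slope at `s` and the path on `[0,s]` bound the path at `t ≥ s`. -/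
lemma future_bound {f c : ℝ → ℝ} (hc : ConcaveOn ℝ (Set.Ici 0) c) (hf : ∀ u, 0 ≤ u → f u ≤ c u)
    (hcont : ContinuousOn f (Set.Ici 0)) {s t x : ℝ} (hs : 0 < s) (hst : s ≤ t)
    (hx : ∀ u, 0 ≤ u → u ≤ s → f u ≤ x + rightDeriv (concaveMajorant f) s * (u - t)) :
    f t ≤ x := by
  have hK := cm_concave hc hf
  have hle : ∀ u, 0 ≤ u → f u ≤ concaveMajorant f u := fun u hu => le_cm hc hf hu
  have hsg : ∀ u, 0 ≤ u → concaveMajorant f u ≤ concaveMajorant f s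
      + rightDeriv (concaveMajorant f) s * (u - s) := fun u hu => concave_supergradient hK hs hu
  set K := concaveMajorant f with hKdef
  set k := rightDeriv K s
  suffices h : K s ≤ x + k * (s - t) by
    have h1 := hle t (hs.le.trans hst)
    have h2 := hsg t (hs.le.trans hst)
    linarith
  by_contra hlt
  push Not at hlt
  obtain ⟨ε, hε, he⟩ : ∃ ε, 0 < ε ∧ K s = x + k * (s - t) + ε :=
    ⟨K s - (x + k * (s - t)), by linarith, by ring⟩
  have hfs := hx s hs.le le_rfl
  have hcs : ContinuousAt f s := hcont.continuousAt (Ici_mem_nhds hs)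
  have hev : ∀ᶠ u in 𝓝 s, f u - k * (u - s) < x + k * (s - t) + ε / 2 := by
    have : ContinuousAt (fun u => f u - k * (u - s)) s := by fun_prop
    refine this.eventually_lt_const ?_
    simp; linarith
  obtain ⟨η, hη, hball⟩ := Metric.eventually_nhds_iff.1 hev
  set δ := ε / (2 * s) with hδ
  have hδ0 : 0 < δ := by positivity
  have hδs : δ * s = ε / 2 := by rw [hδ]; field_simp
  obtain ⟨e, he0, he1, he2⟩ : ∃ e, 0 < e ∧ e ≤ ε / 2 ∧ e ≤ δ * η :=
    ⟨min (ε / 2) (δ * η), lt_min (by positivity) (by positivity), min_le_left _ _, min_le_right _ _⟩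
  have := cm_le (f := f) (line_concave (K s - e) (k + δ) s) (fun u hu => by
    rcases le_or_gt u s with h | h
    · have := hx u hu h
      nlinarith [mul_nonneg hδ0.le hu]
    · rcases lt_or_ge u (s + η) with h' | h'
      · have := hball (y := u) (by rw [Real.dist_eq, abs_lt]; constructor <;> linarith)
        nlinarith [mul_nonneg hδ0.le (sub_nonneg.2 h.le)]
      · have h1 := hle u hu
        have h2 := hsg u hu
        have h3 : δ * η ≤ δ * (u - s) := by gcongr; linarith
        nlinarith) hs.le
  rw [← hKdef] at this
  simp at this
  linarith

/-- two tents -/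
def psi0 (u : ℝ) : ℝ :=
  -2 * min u (1/2) + 4 * min u 1 - 2 * min u (3/2) - 4 * min u (5/2) + 8 * min u 3
    - 4 * min u (7/2)

/-- linear tilt -/
def phi1 (u : ℝ) : ℝ := -4 * min u (1/2) + min u (7/2)

/-- raise both tents -/
def phi2 (u : ℝ) : ℝ := 2 * min u (1/2) + 2 * min u (3/2) - 4 * min u 2 + 2 * min u (5/2)

lemma psi0_one : psi0 1 = 1 := by norm_num [psi0, min_def]
lemma psi0_two : psi0 2 = 0 := by norm_num [psi0, min_def]
lemma psi0_three : psi0 3 = 2 := by norm_num [psi0, min_def]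

lemma psi0_I {u : ℝ} (h1 : 1/2 ≤ u) (h2 : u ≤ 3/2) : psi0 u ≤ 1 := by
  unfold psi0
  rw [min_eq_right h1, min_eq_left h2, min_eq_left (show u ≤ 5/2 by linarith),
    min_eq_left (show u ≤ 3 by linarith), min_eq_left (show u ≤ 7/2 by linarith)]
  rcases min_cases u 1 with h | h <;> linarith

lemma psi0_J {u : ℝ} (h1 : 5/2 ≤ u) (h2 : u ≤ 7/2) : psi0 u ≤ 2 := by
  unfold psi0
  rw [min_eq_right (show 1/2 ≤ u by linarith), min_eq_right (show 1 ≤ u by linarith),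
    min_eq_right (show 3/2 ≤ u by linarith), min_eq_right h1, min_eq_left h2]
  rcases min_cases u 3 with h | h <;> linarith

lemma psi0_out {u : ℝ} (h1 : u < 1/2 ∨ 3/2 < u) (h2 : u < 5/2 ∨ 7/2 < u) : psi0 u = 0 := by
  unfold psi0
  rcases h1 with h1 | h1
  · rw [min_eq_left (show u ≤ 1/2 by linarith), min_eq_left (show u ≤ 1 by linarith),
      min_eq_left (show u ≤ 3/2 by linarith), min_eq_left (show u ≤ 5/2 by linarith),
      min_eq_left (show u ≤ 3 by linarith), min_eq_left (show u ≤ 7/2 by linarith)]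
    ring
  · rw [min_eq_right (show 1/2 ≤ u by linarith), min_eq_right (show 1 ≤ u by linarith),
      min_eq_right (show 3/2 ≤ u by linarith)]
    rcases h2 with h2 | h2
    · rw [min_eq_left (show u ≤ 5/2 by linarith),
        min_eq_left (show u ≤ 3 by linarith), min_eq_left (show u ≤ 7/2 by linarith)]
      ring
    · rw [min_eq_right (show 5/2 ≤ u by linarith),
        min_eq_right (show 3 ≤ u by linarith), min_eq_right (show 7/2 ≤ u by linarith)]
      ring

lemma phi1_mid {u : ℝ} (h1 : 1/2 ≤ u) (h2 : u ≤ 7/2) : phi1 u = u - 2 := by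
  unfold phi1
  rw [min_eq_right h1, min_eq_left h2]; ring

lemma phi1_le {u : ℝ} (h0 : 0 ≤ u) : phi1 u ≤ u - 2 + 2 := by
  unfold phi1
  rcases min_cases u (1/2) with h | h <;> rcases min_cases u (7/2) with h' | h' <;> linarith

lemma phi2_two : phi2 2 = 0 := by norm_num [phi2, min_def]

lemma phi2_I {u : ℝ} (h1 : 1/2 ≤ u) (h2 : u ≤ 3/2) : phi2 u = 1 := by
  unfold phi2
  rw [min_eq_right h1, min_eq_left h2, min_eq_left (by linarith), min_eq_left (by linarith)]
  ring

lemma phi2_J {u : ℝ} (h1 : 5/2 ≤ u) : phi2 u = 1 := by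
  unfold phi2
  rw [min_eq_right (show 1/2 ≤ u by linarith), min_eq_right (show 3/2 ≤ u by linarith),
    min_eq_right (show 2 ≤ u by linarith), min_eq_right h1]
  ring

lemma phi2_le {u : ℝ} : phi2 u ≤ 1 := by
  unfold phi2
  rcases min_cases u (1/2) with h | h <;> rcases min_cases u (3/2) with h'' | h'' <;>
  rcases min_cases u 2 with h' | h' <;> rcases min_cases u (5/2) with a | a <;> linarith

lemma construct {f : ℝ → ℝ} (hf : Continuous f) {M : ℝ} (hM : 1 ≤ M)
    (hb : ∀ u, 0 ≤ u → |f u| ≤ M * (1 + u)) :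
    ∃ c m α β : ℝ, 1/2 ≤ α ∧ α ≤ 3/2 ∧ 5/2 ≤ β ∧ β ≤ 7/2 ∧
      f α + 40 * M * psi0 α = c + m * (α - 2) ∧ f β + 40 * M * psi0 β = c + m * (β - 2) ∧
      (∀ u, 1/2 ≤ u → u ≤ 3/2 → f u + 40 * M * psi0 u ≤ c + m * (u - 2)) ∧
      (∀ u, 5/2 ≤ u → u ≤ 7/2 → f u + 40 * M * psi0 u ≤ c + m * (u - 2)) ∧
      (∀ u, 0 ≤ u → M * (1 + u) + 4 * M ≤ c + m * (u - 2)) ∧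
      c + m * (3 - 2) < f 3 + 40 * M * psi0 3 + 50 * M := by
  obtain ⟨g, hg⟩ : ∃ g : ℝ → ℝ, ∀ u, g u = f u + 40 * M * psi0 u := ⟨_, fun _ => rfl⟩
  have hgc : Continuous g := by
    have : g = fun u => f u + 40 * M * psi0 u := funext hg
    rw [this]; unfold psi0; fun_prop
  simp only [← hg]
  have hcpt : IsCompact ((Set.Icc (1/2:ℝ) (3/2)) ×ˢ (Set.Icc (5/2:ℝ) (7/2))) :=
    isCompact_Icc.prod isCompact_Icc
  obtain ⟨⟨α, β⟩, ⟨⟨ha1, ha2⟩, ⟨hb1, hb2⟩⟩, hmax⟩ := hcpt.exists_isMaxOn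
    ⟨(1, 3), ⟨by norm_num, by norm_num⟩, ⟨by norm_num, by norm_num⟩⟩
    (f := fun p : ℝ × ℝ => ((p.2 - 2) * g p.1 + (2 - p.1) * g p.2) / (p.2 - p.1))
    (by
      refine ContinuousOn.div (by fun_prop) (by fun_prop) ?_
      rintro ⟨a, b⟩ ⟨⟨h1, h2⟩, ⟨h3, h4⟩⟩
      simp only at *
      linarith)
  simp only at ha1 ha2 hb1 hb2
  have hne : β - α ≠ 0 := by linarith
  obtain ⟨c, hc⟩ : ∃ c, c = ((β - 2) * g α + (2 - α) * g β) / (β - α) := ⟨_, rfl⟩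
  obtain ⟨m, hm⟩ : ∃ m, m = (g β - g α) / (β - α) := ⟨_, rfl⟩
  have hα : g α = c + m * (α - 2) := by rw [hc, hm]; field_simp; ring
  have hβ : g β = c + m * (β - 2) := by rw [hc, hm]; field_simp; ring
  have hI : ∀ u, 1/2 ≤ u → u ≤ 3/2 → g u ≤ c + m * (u - 2) := by
    intro u h1 h2
    have h : ((β - 2) * g u + (2 - u) * g β) / (β - u) ≤ c := by
      rw [hc]; exact hmax (show ((u, β) : ℝ × ℝ) ∈ _ from ⟨⟨h1, h2⟩, ⟨hb1, hb2⟩⟩)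
    rw [div_le_iff₀ (by linarith), hβ] at h
    have : (β - 2) * g u ≤ (β - 2) * (c + m * (u - 2)) := by nlinarith
    exact le_of_mul_le_mul_left this (by linarith)
  have hJ : ∀ u, 5/2 ≤ u → u ≤ 7/2 → g u ≤ c + m * (u - 2) := by
    intro u h1 h2
    have h : ((u - 2) * g α + (2 - α) * g u) / (u - α) ≤ c := by
      rw [hc]; exact hmax (show ((α, u) : ℝ × ℝ) ∈ _ from ⟨⟨ha1, ha2⟩, ⟨h1, h2⟩⟩)
    rw [div_le_iff₀ (by linarith), hα] at h
    have : (2 - α) * g u ≤ (2 - α) * (c + m * (u - 2)) := by nlinarith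
    exact le_of_mul_le_mul_left this (by linarith)
  have h1 := hI 1 (by norm_num) (by norm_num)
  have h3 := hJ 3 (by norm_num) (by norm_num)
  have e1 := (abs_le.1 (hb 1 (by norm_num))).1
  have e3 := (abs_le.1 (hb 3 (by norm_num))).1
  have eα := (abs_le.1 (hb α (by linarith))).2
  have eβ := (abs_le.1 (hb β (by linarith))).2
  have pα := psi0_I ha1 ha2
  have pβ := psi0_J hb1 hb2
  have g1 : 38 * M ≤ g 1 := by rw [hg, psi0_one]; linarith
  have g3 : 76 * M ≤ g 3 := by rw [hg, psi0_three]; linarith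
  have gα : g α ≤ 42.5 * M := by rw [hg]; nlinarith
  have gβ : g β ≤ 84.5 * M := by rw [hg]; nlinarith
  have k1 : 33.5 * M ≤ m * (3 - α) := by linarith
  have k2 : m * (β - 1) ≤ 46.5 * M := by linarith
  have hm0 : 0 < m := by
    by_contra h; push Not at h
    have : m * (3 - α) ≤ 0 := mul_nonpos_of_nonpos_of_nonneg h (by linarith)
    linarith
  have m1 : 13.4 * M ≤ m := by nlinarith
  have m2 : m ≤ 31 * M := by nlinarith
  refine ⟨c, m, α, β, ha1, ha2, hb1, hb2, hα, hβ, hI, hJ, ?_, ?_⟩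
  · intro u hu
    have : M * u ≤ m * u := by gcongr; linarith
    linarith
  · nlinarith

/-! ### Path-level consequences -/

lemma shiftFun_cons (p : ℝ≥0 × ℝ) (l : List (ℝ≥0 × ℝ)) (t : ℝ≥0) :
    shiftFun (p :: l) t = p.2 * min (t : ℝ) (p.1 : ℝ) + shiftFun l t := by
  simp [shiftFun]

lemma shiftFun_nil (t : ℝ≥0) : shiftFun [] t = 0 := by simp [shiftFun]

lemma Good.add_shift {F : ℝ≥0 → ℝ} (h : Good F) (l : List (ℝ≥0 × ℝ)) :
    Good (fun t => F t + shiftFun l t) := by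
  induction l with
  | nil => simpa [shiftFun_nil] using h
  | cons p l ih =>
    obtain ⟨hc, M, hM⟩ := ih
    refine ⟨?_, M + |p.2|, fun u => ?_⟩
    · have : (fun t => F t + shiftFun (p :: l) t)
          = fun t => (F t + shiftFun l t) + p.2 * min (t : ℝ) (p.1 : ℝ) := by
        funext t; rw [shiftFun_cons]; ring
      rw [this]
      exact hc.add (by fun_prop)
    · change F u + shiftFun (p :: l) u ≤ _
      rw [shiftFun_cons]
      have h1 : F u + shiftFun l u ≤ M * (1 + u) := hM u
      have h2 : p.2 * min (u : ℝ) (p.1 : ℝ) ≤ |p.2| * (1 + u) := by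
        have h3 : 0 ≤ min (u : ℝ) (p.1 : ℝ) := le_min u.2 p.1.2
        have h4 : min (u : ℝ) (p.1 : ℝ) ≤ 1 + u := (min_le_left _ _).trans (by linarith)
        calc p.2 * min (u : ℝ) (p.1 : ℝ) ≤ |p.2| * min (u : ℝ) (p.1 : ℝ) := by
              gcongr; exact le_abs_self _
          _ ≤ _ := by gcongr
      linarith

/-- the list for the two tents -/
def lpsi (M : ℝ) : List (ℝ≥0 × ℝ) :=
  [(1/2, -2 * (40 * M)), (1, 4 * (40 * M)), (3/2, -2 * (40 * M)), (5/2, -4 * (40 * M)),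
    (3, 8 * (40 * M)), (7/2, -4 * (40 * M))]

/-- the list for the tents plus tilt -/
def lpsi1 (M : ℝ) : List (ℝ≥0 × ℝ) := (1/2, -4) :: (7/2, 1) :: lpsi M

/-- the list for the raised tents -/
def lpsi2 (M : ℝ) : List (ℝ≥0 × ℝ) :=
  (1/2, 2 * (50 * M)) :: (3/2, 2 * (50 * M)) :: (2, -4 * (50 * M)) :: (5/2, 2 * (50 * M)) :: lpsi M

lemma lpsi_eq (M : ℝ) (t : ℝ≥0) : shiftFun (lpsi M) t = 40 * M * psi0 t := by
  simp only [lpsi, shiftFun_cons, shiftFun_nil, psi0]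
  push_cast
  ring

lemma lpsi1_eq (M : ℝ) (t : ℝ≥0) : shiftFun (lpsi1 M) t = 40 * M * psi0 t + phi1 t := by
  simp only [lpsi1, shiftFun_cons, lpsi_eq, phi1]
  push_cast
  ring

lemma lpsi2_eq (M : ℝ) (t : ℝ≥0) : shiftFun (lpsi2 M) t = 40 * M * psi0 t + 50 * M * phi2 t := by
  simp only [lpsi2, shiftFun_cons, lpsi_eq, phi2]
  push_cast
  ring

lemma lpsi_pos (M : ℝ) : ∀ p ∈ lpsi M, 0 < p.1 := by
  simp [lpsi]

lemma lpsi1_pos (M : ℝ) : ∀ p ∈ lpsi1 M, 0 < p.1 := by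
  simp [lpsi1, lpsi]

lemma lpsi2_pos (M : ℝ) : ∀ p ∈ lpsi2 M, 0 < p.1 := by
  simp [lpsi2, lpsi]

lemma pext_shift {F : ℝ≥0 → ℝ} {l : List (ℝ≥0 × ℝ)} {h : ℝ → ℝ}
    (hl : ∀ t : ℝ≥0, shiftFun l t = h t) {u : ℝ} (hu : 0 ≤ u) :
    pext (fun t => F t + shiftFun l t) u = pext F u + h u := by
  simp only [pext, hl, Real.coe_toNNReal u hu]

lemma rightDeriv_line {K : ℝ → ℝ} {c m : ℝ} (h : ∀ u, 2 ≤ u → u ≤ 5/2 → K u = c + m * (u - 2)) :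
    rightDeriv K 2 = m := by
  have hl : HasDerivAt (fun u : ℝ => c + m * (u - 2)) m 2 := by
    simpa using (((hasDerivAt_id (2:ℝ)).sub_const 2).const_mul m).const_add c
  have h2 : HasDerivWithinAt K m (Set.Ioi 2) 2 := by
    refine hl.hasDerivWithinAt.congr_of_eventuallyEq ?_ (h 2 le_rfl (by norm_num))
    filter_upwards [Ioo_mem_nhdsGT (show (2:ℝ) < 5/2 by norm_num)] with u hu
    exact h u hu.1.le hu.2.le
  exact h2.derivWithin (uniqueDiffWithinAt_Ioi 2)

lemma good_of_bound {F : ℝ≥0 → ℝ} (hF : Continuous F) {M : ℝ}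
    (hb : ∀ u : ℝ≥0, |F u| ≤ M * (1 + u)) : Good F :=
  ⟨hF, M, fun u => (le_abs_self _).trans (hb u)⟩

/-- The common part of the constructions. -/
lemma path_common {F : ℝ≥0 → ℝ} (hF : Continuous F) {M : ℝ} (hM : 1 ≤ M)
    (hb : ∀ u : ℝ≥0, |F u| ≤ M * (1 + u)) :
    ∃ c m : ℝ,
      (∀ u, 0 ≤ u → pext (fun t => F t + shiftFun (lpsi M) t) u ≤ c + m * (u - 2)) ∧
      (∀ u, 3/2 ≤ u → u ≤ 5/2 →
        concaveMajorant (pext (fun t => F t + shiftFun (lpsi M) t)) u = c + m * (u - 2)) ∧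
      (∀ u, 3/2 ≤ u → u ≤ 5/2 →
        concaveMajorant (pext (fun t => F t + shiftFun (lpsi1 M) t)) u
          = c + (m + 1) * (u - 2)) ∧
      (∀ u, 3/2 ≤ u → u ≤ 5/2 →
        concaveMajorant (pext (fun t => F t + shiftFun (lpsi2 M) t)) u
          = (c + 50 * M) + m * (u - 2)) ∧
      c + m * (3 - 2) < F 3 + shiftFun (lpsi2 M) 3 := by
  have hfc : Continuous (pext F) := hF.comp continuous_real_toNNReal
  have hfb : ∀ u, 0 ≤ u → |pext F u| ≤ M * (1 + u) := by
    intro u hu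
    have := hb u.toNNReal
    rwa [Real.coe_toNNReal u hu] at this
  obtain ⟨c, m, α, β, ha1, ha2, hb1, hb2, hα, hβ, hI, hJ, hlow, h3⟩ := construct hfc hM hfb
  have e0 := fun u hu => pext_shift (F := F) (l := lpsi M) (h := fun u => 40 * M * psi0 u)
    (lpsi_eq M) (u := u) hu
  have e1 := fun u hu => pext_shift (F := F) (l := lpsi1 M)
    (h := fun u => 40 * M * psi0 u + phi1 u) (lpsi1_eq M) (u := u) hu
  have e2 := fun u hu => pext_shift (F := F) (l := lpsi2 M)
    (h := fun u => 40 * M * psi0 u + 50 * M * phi2 u) (lpsi2_eq M) (u := u) hu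
  have hcases : ∀ u : ℝ, 0 ≤ u → (1/2 ≤ u ∧ u ≤ 3/2) ∨ (5/2 ≤ u ∧ u ≤ 7/2) ∨
      (psi0 u = 0 ∧ pext F u + 4 * M ≤ c + m * (u - 2)) := by
    intro u hu
    by_cases h1 : 1/2 ≤ u ∧ u ≤ 3/2
    · exact Or.inl h1
    by_cases h2 : 5/2 ≤ u ∧ u ≤ 7/2
    · exact Or.inr (Or.inl h2)
    refine Or.inr (Or.inr ⟨psi0_out ?_ ?_, ?_⟩)
    · by_contra! h; exact h1 h
    · by_contra! h; exact h2 h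
    · have := (abs_le.1 (hfb u hu)).2
      have := hlow u hu
      linarith
  have hα0 : 0 ≤ α := by linarith
  have hβ0 : 0 ≤ β := by linarith
  have hαβ : α < β := by linarith
  have b0 : ∀ u, 0 ≤ u → pext (fun t => F t + shiftFun (lpsi M) t) u ≤ c + m * (u - 2) := by
    intro u hu
    rw [e0 u hu]
    rcases hcases u hu with h | h | ⟨h, h'⟩
    · exact hI u h.1 h.2
    · exact hJ u h.1 h.2
    · rw [h]; linarith
  refine ⟨c, m, b0, ?_, ?_, ?_, ?_⟩
  · intro u h1 h2
    exact cm_line b0 hα0 hαβ (by rw [e0 _ hα0, hα]) (by rw [e0 _ hβ0, hβ]) (by linarith)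
      (by linarith)
  · intro u h1 h2
    refine cm_line (α := α) (β := β) ?_ hα0 hαβ ?_ ?_ (by linarith) (by linarith)
    · intro u hu
      rw [e1 u hu]
      rcases hcases u hu with h | h | ⟨h, h'⟩
      · have := hI u h.1 h.2
        rw [phi1_mid h.1 (by linarith [h.2])]; linarith
      · have := hJ u h.1 h.2
        rw [phi1_mid (by linarith [h.1]) h.2]; linarith
      · have := phi1_le hu
        rw [h]; linarith
    · rw [e1 _ hα0, phi1_mid ha1 (by linarith)]; linarith
    · rw [e1 _ hβ0, phi1_mid (by linarith) hb2]; linarith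
  · intro u h1 h2
    refine cm_line (α := α) (β := β) ?_ hα0 hαβ ?_ ?_ (by linarith) (by linarith)
    · intro u hu
      have h1 := b0 u hu
      rw [e0 u hu] at h1
      rw [e2 u hu]
      have h2 : 50 * M * phi2 u ≤ 50 * M * 1 := by
        gcongr
        exact phi2_le
      linarith
    · rw [e2 _ hα0, phi2_I ha1 ha2]; linarith
    · rw [e2 _ hβ0, phi2_J hb1]; linarith
  · rw [lpsi2_eq]
    have : pext F 3 = F 3 := by simp [pext]
    rw [this] at h3
    have h4 : phi2 3 = 1 := phi2_J (by norm_num)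
    push_cast
    rw [h4]; linarith

lemma path1 {F : ℝ≥0 → ℝ} (hF : Continuous F) {M : ℝ} (hM : 1 ≤ M)
    (hb : ∀ u : ℝ≥0, |F u| ≤ M * (1 + u)) :
    ∃ x : ℚ, 2 * Kt 2 (fun t => F t + shiftFun (lpsi M) t)
        - Kt (3/2) (fun t => F t + shiftFun (lpsi M) t) ≤ x ∧
      (x : ℝ) < Kt (5/2) (fun t => F t + shiftFun (lpsi1 M) t) ∧
      ((Kt 2 (fun t => F t + shiftFun (lpsi M) t), F 2 + shiftFun (lpsi M) 2) : ℝ × ℝ)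
      = (Kt 2 (fun t => F t + shiftFun (lpsi1 M) t), F 2 + shiftFun (lpsi1 M) 2) := by
  obtain ⟨c, m, -, k0, k1, -, -⟩ := path_common hF hM hb
  have g := good_of_bound hF hb
  have g0 := g.add_shift (lpsi M)
  have g1 := g.add_shift (lpsi1 M)
  rw [g0.Kt_eq (by norm_num), g0.Kt_eq (by norm_num), g1.Kt_eq (by norm_num),
    g1.Kt_eq (by norm_num), k0 _ (by norm_num) (by norm_num), k0 _ (by norm_num) (by norm_num),
    k1 _ (by norm_num) (by norm_num), k1 _ (by norm_num) (by norm_num)]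
  obtain ⟨x, hx1, hx2⟩ := exists_rat_btwn
    (show 2 * (c + m * (2 - 2)) - (c + m * (3/2 - 2)) < c + (m + 1) * (5/2 - 2) by linarith)
  refine ⟨x, hx1.le, hx2, ?_⟩
  have h2 : phi1 2 = 0 := by rw [phi1_mid (by norm_num) (by norm_num)]; ring
  simp [lpsi_eq, lpsi1_eq, h2]

lemma path2 {F : ℝ≥0 → ℝ} (hF : Continuous F) {M : ℝ} (hM : 1 ≤ M)
    (hb : ∀ u : ℝ≥0, |F u| ≤ M * (1 + u)) :
    ∃ x : ℚ, (∀ q : ℚ, rq q ≤ 2 → F (rq q) + shiftFun (lpsi M) (rq q) ≤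
        x + kt 2 (fun t => F t + shiftFun (lpsi M) t) * ((rq q : ℝ) - 3)) ∧
      (x : ℝ) < F 3 + shiftFun (lpsi2 M) 3 ∧
      ((kt 2 (fun t => F t + shiftFun (lpsi M) t), F 2 + shiftFun (lpsi M) 2) : ℝ × ℝ)
      = (kt 2 (fun t => F t + shiftFun (lpsi2 M) t), F 2 + shiftFun (lpsi2 M) 2) := by
  obtain ⟨c, m, b0, k0, -, k2, h3⟩ := path_common hF hM hb
  have g := good_of_bound hF hb
  have g0 := g.add_shift (lpsi M)
  have g2 := g.add_shift (lpsi2 M)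
  rw [g0.kt_eq (by norm_num), g2.kt_eq (by norm_num),
    rightDeriv_line (fun u h1 h2 => k0 u (by linarith) h2),
    rightDeriv_line (fun u h1 h2 => k2 u (by linarith) h2)]
  obtain ⟨x, hx1, hx2⟩ := exists_rat_btwn h3
  refine ⟨x, fun q _ => ?_, hx2, ?_⟩
  · have := b0 (rq q) (rq q).2
    have e : pext (fun t => F t + shiftFun (lpsi M) t) (rq q)
      = F (rq q) + shiftFun (lpsi M) (rq q) := by simp [pext]
    rw [e] at this
    linarith
  · simp [lpsi_eq, lpsi2_eq, phi2_two]

/-! ### Probabilistic part -/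

lemma sep_aux {Ω : Type*} {m' mΩ : MeasurableSpace Ω} {P : Measure Ω} [IsProbabilityMeasure P]
    (hm : m' ≤ mΩ) {C : Set Ω} (hC : MeasurableSet C) :
    ∀ᵐ ω ∂P, (P[C.indicator (fun _ => (1:ℝ)) | m']) ω = 0 → ω ∉ C := by
  set w := P[C.indicator (fun _ => (1:ℝ)) | m'] with hw
  have hwm : Measurable[m'] w := stronglyMeasurable_condExp.measurable
  have hZ : MeasurableSet[m'] {ω | w ω = 0} := hwm (measurableSet_singleton 0)
  have hint : Integrable (C.indicator (fun _ => (1:ℝ))) P := (integrable_const 1).indicator hC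
  have h := setIntegral_condExp hm hint hZ
  have h0 : ∫ x in {ω | w ω = 0}, w x ∂P = 0 := by
    rw [setIntegral_congr_fun (hm _ hZ) (g := fun _ => 0) (fun x hx => hx)]
    simp
  rw [← hw, h0, setIntegral_indicator hC] at h
  simp only [integral_const, smul_eq_mul, mul_one, measureReal_restrict_apply_univ] at h
  have h1 : P ({ω | w ω = 0} ∩ C) = 0 := by
    rw [← measureReal_eq_zero_iff]; exact h.symm
  filter_upwards [measure_eq_zero_iff_ae_notMem.1 h1] with ω hω h2 h3
  exact hω ⟨h2, h3⟩

lemma sep {Ω E : Type*} [mE : MeasurableSpace E] {m1 m2 mΩ : MeasurableSpace Ω}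
    [StandardBorelSpace Ω] {P : Measure Ω} [IsProbabilityMeasure P] {Y : Ω → E}
    (hs : MeasurableSpace.comap Y mE ≤ mΩ) (hm1 : m1 ≤ mΩ) (hm2 : m2 ≤ mΩ)
    (h : CondIndep (MeasurableSpace.comap Y mE) m1 m2 hs P) {C D : Set Ω}
    (hD : MeasurableSet[m1] D) (hC : MeasurableSet[m2] C)
    (h0 : ∀ᵐ ω ∂P, ω ∈ D → ω ∉ C) :
    ∃ W : Set E, MeasurableSet W ∧ (∀ᵐ ω ∂P, ω ∈ C → Y ω ∈ W) ∧
      (∀ᵐ ω ∂P, ω ∈ D → Y ω ∉ W) := by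
  have hi := (condIndep_iff _ m1 m2 hs hm1 hm2 P).1 h D C hD hC
  have hz : P[(D ∩ C).indicator (fun _ => (1:ℝ)) | MeasurableSpace.comap Y mE] =ᵐ[P] 0 := by
    have : (D ∩ C).indicator (fun _ => (1:ℝ)) =ᵐ[P] 0 := by
      filter_upwards [h0] with ω hω
      rw [Set.indicator_of_notMem]
      · rfl
      · rintro ⟨h1, h2⟩; exact hω h1 h2
    exact (condExp_congr_ae this).trans (by rw [condExp_zero])
  set v := P[D.indicator (fun _ => (1:ℝ)) | MeasurableSpace.comap Y mE] with hv
  set w := P[C.indicator (fun _ => (1:ℝ)) | MeasurableSpace.comap Y mE] with hw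
  have hwm : Measurable[MeasurableSpace.comap Y mE] w := stronglyMeasurable_condExp.measurable
  have hZ : MeasurableSet[MeasurableSpace.comap Y mE] {ω | w ω = 0}ᶜ :=
    (hwm (measurableSet_singleton 0)).compl
  obtain ⟨W, hW, hWe⟩ := hZ
  have hiff : ∀ ω, Y ω ∈ W ↔ w ω ≠ 0 := fun ω => by
    have : ω ∈ Y ⁻¹' W ↔ ω ∈ {ω | w ω = 0}ᶜ := by rw [hWe]
    exact this
  refine ⟨W, hW, ?_, ?_⟩
  · filter_upwards [sep_aux (P := P) hs (hm2 _ hC)] with ω hω h1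
    rw [hiff]
    exact fun h2 => hω h2 h1
  · filter_upwards [sep_aux (P := P) hs (hm1 _ hD), hi, hz] with ω hω h1 h2 h3
    rw [hiff, not_not]
    rw [h2] at h1
    simp only [Pi.zero_apply, Pi.mul_apply] at h1
    rcases mul_eq_zero.1 h1.symm with h4 | h4
    · exact absurd h3 (hω h4)
    · exact h4

lemma core {Ω : Type*} [MeasurableSpace Ω] {P : Measure Ω} [IsProbabilityMeasure P]
    {B : ℝ → Ω → ℝ} (hB : IsBrownianMotion P B) {Y : (ℝ≥0 → ℝ) → ℝ × ℝ} (hY : Measurable Y)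
    {C D : Set (ℝ≥0 → ℝ)} (hC : MeasurableSet C) (hD : MeasurableSet D) {W : Set (ℝ × ℝ)}
    (hW : MeasurableSet W)
    (h1 : ∀ᵐ ω ∂P, (fun t : ℝ≥0 => B t ω) ∈ C → Y (fun t : ℝ≥0 => B t ω) ∈ W)
    (h2 : ∀ᵐ ω ∂P, (fun t : ℝ≥0 => B t ω) ∈ D → Y (fun t : ℝ≥0 => B t ω) ∉ W)
    (l1 l2 : List (ℝ≥0 × ℝ)) (hl1 : ∀ p ∈ l1, 0 < p.1) (hl2 : ∀ p ∈ l2, 0 < p.1) :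
    ∀ᵐ ω ∂P, (fun t : ℝ≥0 => B t ω + shiftFun l1 t) ∈ C →
      (fun t : ℝ≥0 => B t ω + shiftFun l2 t) ∈ D →
      Y (fun t : ℝ≥0 => B t ω + shiftFun l1 t) = Y (fun t : ℝ≥0 => B t ω + shiftFun l2 t) →
      False := by
  have hbm := bm_isBrownianReal hB
  have mF : Measurable (fun ω (t : ℝ≥0) => B t ω) :=
    measurable_pi_lambda _ fun t => hB.measurable _
  have mS : ∀ l, Measurable (fun (f : ℝ≥0 → ℝ) t => f t + shiftFun l t) := fun l =>
    measurable_pi_lambda _ fun t => (measurable_pi_apply t).add_const _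
  have tr : ∀ (l : List (ℝ≥0 × ℝ)), (∀ p ∈ l, 0 < p.1) → ∀ A : Set (ℝ≥0 → ℝ), MeasurableSet A →
      (∀ᵐ ω ∂P, (fun t : ℝ≥0 => B t ω) ∈ A) →
      ∀ᵐ ω ∂P, (fun t : ℝ≥0 => B t ω + shiftFun l t) ∈ A := by
    intro l hl A hA h
    have hac := shift_ac_list hbm.toIsPreBrownianReal (fun t => hB.measurable _) l hl
    have h' : ∀ᵐ f ∂(P.map (fun ω (t : ℝ≥0) => B t ω)), f ∈ A :=
      (ae_map_iff mF.aemeasurable hA).2 h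
    have h'' := hac.ae_le h'
    have h3 := (ae_map_iff (mS l).aemeasurable hA).1 h''
    exact (ae_map_iff mF.aemeasurable (mS l hA)).1 h3
  have a1 := tr l1 hl1 {f | f ∈ C → Y f ∈ W} (by
    have : {f | f ∈ C → Y f ∈ W} = Cᶜ ∪ Y ⁻¹' W := by ext f; simp [imp_iff_not_or]
    rw [this]; exact hC.compl.union (hY hW)) h1
  have a2 := tr l2 hl2 {f | f ∈ D → Y f ∉ W} (by
    have : {f | f ∈ D → Y f ∉ W} = Dᶜ ∪ (Y ⁻¹' W)ᶜ := by ext f; simp [imp_iff_not_or]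
    rw [this]; exact hD.compl.union (hY hW).compl) h2
  filter_upwards [a1, a2] with ω b1 b2 c1 c2 e
  exact b2 c2 (e ▸ b1 c1)

lemma bm_paths {Ω : Type*} [MeasurableSpace Ω] {P : Measure Ω} [IsProbabilityMeasure P]
    {B : ℝ → Ω → ℝ} (hB : IsBrownianMotion P B) :
    ∀ᵐ ω ∂P, Continuous (fun t : ℝ≥0 => B t ω) ∧
      ∃ M : ℕ, (1:ℝ) ≤ M ∧ ∀ u : ℝ≥0, |B u ω| ≤ M * (1 + u) := by
  filter_upwards [bm_growth hB, (bm_isBrownianReal hB).cont] with ω ⟨M, hM⟩ hc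
  refine ⟨hc, M + 1, by push_cast; linarith [(Nat.cast_nonneg M : (0:ℝ) ≤ M)], fun u => ?_⟩
  have h1 := hM u u.2
  have h2 := u.2
  push_cast
  have : (0:ℝ) ≤ (u:ℝ) := u.2
  nlinarith

lemma Kproc_eq {Ω : Type*} (B : ℝ → Ω → ℝ) (ω : Ω) (s : ℝ) :
    Kproc B s ω = concaveMajorant (pext (fun t : ℝ≥0 => B t ω)) s := by
  unfold Kproc
  rw [cm_congr (f := fun u => B u ω) (g := pext (fun t : ℝ≥0 => B t ω))]
  intro u hu
  simp [pext, Real.coe_toNNReal u hu]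

lemma Kslope_eq {Ω : Type*} (B : ℝ → Ω → ℝ) (ω : Ω) (s : ℝ) :
    Kslope B s ω = rightDeriv (concaveMajorant (pext (fun t : ℝ≥0 => B t ω))) s := by
  unfold Kslope
  congr 1
  funext u
  exact Kproc_eq B ω u

lemma natSigma_meas {Ω E : Type*} [MeasurableSpace E] (Y : ℝ → Ω → E) {u s : ℝ}
    (h0 : 0 ≤ u) (hu : u ≤ s) : Measurable[natSigma Y s] (Y u) := by
  rw [measurable_iff_comap_le]
  exact le_iSup (fun v : Set.Icc (0:ℝ) s => MeasurableSpace.comap (Y v) inferInstance) ⟨u, h0, hu⟩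

lemma markov_sep {Ω E : Type*} [MeasurableSpace E] [mΩ : MeasurableSpace Ω]
    [StandardBorelSpace Ω] {P : Measure Ω} [IsProbabilityMeasure P] {Y : ℝ → Ω → E}
    (h : IsMarkov P Y) {s t : ℝ} (hs : 0 ≤ s) (hst : s ≤ t) {C D : Set Ω}
    (hD : MeasurableSet[MeasurableSpace.comap (Y t) inferInstance] D)
    (hC : MeasurableSet[natSigma Y s] C) (h0 : ∀ᵐ ω ∂P, ω ∈ D → ω ∉ C) :
    ∃ W : Set E, MeasurableSet W ∧ (∀ᵐ ω ∂P, ω ∈ C → Y s ω ∈ W) ∧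
      (∀ᵐ ω ∂P, ω ∈ D → Y s ω ∉ W) := by
  have hle : ∀ u, 0 ≤ u → MeasurableSpace.comap (Y u) inferInstance ≤ mΩ :=
    fun u hu => (h u u hu le_rfl).1
  obtain ⟨hs', hci⟩ := h s t hs hst
  exact sep hs' (hle t (hs.trans hst)) (iSup_le fun u : Set.Icc (0:ℝ) s => hle u u.2.1) hci hD hC h0

lemma part1 {Ω : Type*} [MeasurableSpace Ω] [StandardBorelSpace Ω]
    (P : Measure Ω) [IsProbabilityMeasure P] (B : ℝ → Ω → ℝ)
    (hB : IsBrownianMotion P B) :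
    ¬ IsMarkov P (fun t ω => ((Kproc B t ω, B t ω) : ℝ × ℝ)) := by
  intro hM
  have hpaths := bm_paths hB
  have key : ∀ (N : ℕ) (x : ℚ), ∀ᵐ ω ∂P,
      2 * Kt 2 (fun t => B t ω + shiftFun (lpsi N) t)
        - Kt (3/2) (fun t => B t ω + shiftFun (lpsi N) t) ≤ x →
      (x : ℝ) < Kt (5/2) (fun t => B t ω + shiftFun (lpsi1 N) t) →
      ((Kt 2 (fun t => B t ω + shiftFun (lpsi N) t), B (2 : ℝ≥0) ω + shiftFun (lpsi N) 2) : ℝ × ℝ)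
      = (Kt 2 (fun t => B t ω + shiftFun (lpsi1 N) t), B (2 : ℝ≥0) ω + shiftFun (lpsi1 N) 2) →
      False := by
    intro N x
    set Y : ℝ → Ω → ℝ × ℝ := fun t ω => (Kproc B t ω, B t ω) with hYdef
    obtain ⟨W, hW, w1, w2⟩ := markov_sep (s := 2) (t := 5/2) hM (by norm_num) (by norm_num)
      (D := {ω | (x : ℝ) < Kproc B (5/2) ω})
      (C := {ω | 2 * Kproc B 2 ω - Kproc B (3/2) ω ≤ x})
      ⟨{p | (x:ℝ) < p.1}, measurableSet_lt measurable_const measurable_fst, rfl⟩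
      (by
        have m2 := @Measurable.comp _ _ _ (natSigma Y 2) _ _ _ _ measurable_fst
          (natSigma_meas Y (u := 2) (s := 2) (by norm_num) le_rfl)
        have m1 := @Measurable.comp _ _ _ (natSigma Y 2) _ _ _ _ measurable_fst
          (natSigma_meas Y (u := 3/2) (s := 2) (by norm_num) (by norm_num))
        exact @measurableSet_le _ _ _ _ _ (natSigma Y 2) _ _ _ _ _ ((m2.const_mul 2).sub m1)
          measurable_const)
      (by
        filter_upwards [hpaths] with ω ⟨hc, M, hM1, hMb⟩ h1 h2
        obtain ⟨c, hc, hfc⟩ := (good_of_bound hc hMb).majorant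
        have hK := cm_concave hc hfc
        simp only [Set.mem_setOf_eq, Kproc_eq] at h1 h2
        have := hK.2 (show (3/2:ℝ) ∈ Set.Ici (0:ℝ) by norm_num [Set.mem_Ici])
          (show (5/2:ℝ) ∈ Set.Ici (0:ℝ) by norm_num [Set.mem_Ici])
          (show (0:ℝ) ≤ 1/2 by norm_num) (show (0:ℝ) ≤ 1/2 by norm_num) (by norm_num)
        simp only [smul_eq_mul] at this
        rw [show (1/2:ℝ) * (3/2) + 1/2 * (5/2) = 2 by norm_num] at this
        linarith)
    exact core hB (Y := fun f => (Kt 2 f, f 2))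
      ((measurable_Kt 2).prodMk (measurable_pi_apply 2))
      (C := {f | 2 * Kt 2 f - Kt (3/2) f ≤ x}) (D := {f | (x:ℝ) < Kt (5/2) f})
      (measurableSet_le (((measurable_Kt _).const_mul 2).sub (measurable_Kt _)) measurable_const)
      (measurableSet_lt measurable_const (measurable_Kt _)) hW
      (by
        filter_upwards [hpaths, w1] with ω ⟨hc, M, hM1, hMb⟩ h1 h2
        have g := good_of_bound hc hMb
        simp only [Set.mem_setOf_eq, Kproc_eq, hYdef] at h1 h2
        rw [g.Kt_eq (by norm_num), g.Kt_eq (by norm_num)] at h2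
        rw [g.Kt_eq (by norm_num)]
        exact h1 h2)
      (by
        filter_upwards [hpaths, w2] with ω ⟨hc, M, hM1, hMb⟩ h1 h2
        have g := good_of_bound hc hMb
        simp only [Set.mem_setOf_eq, Kproc_eq, hYdef] at h1 h2
        rw [g.Kt_eq (by norm_num)] at h2
        rw [g.Kt_eq (by norm_num)]
        exact h1 h2)
      (lpsi N) (lpsi1 N) (lpsi_pos N) (lpsi1_pos N)
  have hall : ∀ᵐ ω ∂P, False := by
    filter_upwards [hpaths, ae_all_iff.2 fun N => ae_all_iff.2 (key N)] with ω ⟨hc, M, hM1, hMb⟩ hk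
    obtain ⟨x, h1, h2, h3⟩ := path1 hc hM1 hMb
    exact hk M x h1 h2 h3
  obtain ⟨_, h⟩ := hall.exists
  exact h

lemma part2 {Ω : Type*} [MeasurableSpace Ω] [StandardBorelSpace Ω]
    (P : Measure Ω) [IsProbabilityMeasure P] (B : ℝ → Ω → ℝ)
    (hB : IsBrownianMotion P B) :
    ¬ IsMarkov P (fun t ω => ((Kslope B t ω, B t ω) : ℝ × ℝ)) := by
  intro hM
  have hpaths := bm_paths hB
  have key : ∀ (N : ℕ) (x : ℚ), ∀ᵐ ω ∂P,
      (∀ q : ℚ, rq q ≤ 2 → B (rq q) ω + shiftFun (lpsi N) (rq q) ≤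
        x + kt 2 (fun t => B t ω + shiftFun (lpsi N) t) * ((rq q : ℝ) - 3)) →
      (x : ℝ) < B (3 : ℝ≥0) ω + shiftFun (lpsi2 N) 3 →
      ((kt 2 (fun t => B t ω + shiftFun (lpsi N) t), B (2 : ℝ≥0) ω + shiftFun (lpsi N) 2) : ℝ × ℝ)
      = (kt 2 (fun t => B t ω + shiftFun (lpsi2 N) t), B (2 : ℝ≥0) ω + shiftFun (lpsi2 N) 2) →
      False := by
    intro N x
    set Y : ℝ → Ω → ℝ × ℝ := fun t ω => (Kslope B t ω, B t ω) with hYdef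
    obtain ⟨W, hW, w1, w2⟩ := markov_sep (s := 2) (t := 3) hM (by norm_num) (by norm_num)
      (D := {ω | (x : ℝ) < B 3 ω})
      (C := {ω | ∀ q : ℚ, rq q ≤ 2 → B (rq q) ω ≤ x + Kslope B 2 ω * ((rq q : ℝ) - 3)})
      ⟨{p | (x:ℝ) < p.2}, measurableSet_lt measurable_const measurable_snd, rfl⟩
      (by
        have m2 := @Measurable.comp _ _ _ (natSigma Y 2) _ _ _ _ measurable_fst
          (natSigma_meas Y (u := 2) (s := 2) (by norm_num) le_rfl)
        simp only [Set.setOf_forall]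
        refine @MeasurableSet.iInter _ _ (natSigma Y 2) _ _ fun q =>
          @MeasurableSet.iInter _ _ (natSigma Y 2) _ _ fun hq => ?_
        have m1 := @Measurable.comp _ _ _ (natSigma Y 2) _ _ _ _ measurable_snd
          (natSigma_meas Y (u := rq q) (s := 2) (rq q).2 (by exact_mod_cast hq))
        exact @measurableSet_le _ _ _ _ _ (natSigma Y 2) _ _ _ _ _ m1
          ((m2.mul_const _).const_add _))
      (by
        filter_upwards [hpaths] with ω ⟨hc, M, hM1, hMb⟩ h1 h2
        obtain ⟨c, hcc, hfc⟩ := (good_of_bound hc hMb).majorant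
        simp only [Set.mem_setOf_eq, Kslope_eq] at h1 h2
        have hfb := future_bound (s := 2) (t := 3) (x := x) hcc hfc
          (hc.comp continuous_real_toNNReal).continuousOn (by norm_num) (by norm_num)
        set k := rightDeriv (concaveMajorant (pext (fun t : ℝ≥0 => B t ω))) 2
        have hlt : ∀ u : ℝ≥0, u < 2 → B u ω ≤ x + k * ((u:ℝ) - 3) := by
          intro u hu
          have hcl : IsClosed {u : ℝ≥0 | B u ω ≤ x + k * ((u:ℝ) - 3)} :=
            isClosed_le hc (by fun_prop)
          have hsub : Set.Iio (2:ℝ≥0) ⊆ closure (Set.Iio 2 ∩ Set.range rq) :=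
            rq_dense.open_subset_closure_inter isOpen_Iio
          refine hcl.closure_subset_iff.2 ?_ (hsub hu)
          rintro _ ⟨h, q, rfl⟩
          exact h2 q (le_of_lt h)
        have hle : ∀ u : ℝ≥0, u ≤ 2 → B u ω ≤ x + k * ((u:ℝ) - 3) := by
          intro u hu
          have hcl : IsClosed {u : ℝ≥0 | B u ω ≤ x + k * ((u:ℝ) - 3)} :=
            isClosed_le hc (by fun_prop)
          have hsub : Set.Iic (2:ℝ≥0) ⊆ closure (Set.Iio 2) := by
            rw [closure_Iio' ⟨0, by simp⟩]
          exact hcl.closure_subset_iff.2 hlt (hsub hu)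
        have := hfb (fun u hu0 hu => by
          have h3 := hle u.toNNReal (by
            rw [← NNReal.coe_le_coe, Real.coe_toNNReal u hu0]; simpa using hu)
          rw [Real.coe_toNNReal u hu0] at h3
          simpa [pext, Real.coe_toNNReal u hu0] using h3)
        simp only [pext] at this
        rw [Real.coe_toNNReal 3 (by norm_num)] at this
        linarith)
    exact core hB (Y := fun f => (kt 2 f, f 2))
      ((measurable_kt 2).prodMk (measurable_pi_apply 2))
      (C := {f | ∀ q : ℚ, rq q ≤ 2 → f (rq q) ≤ x + kt 2 f * ((rq q : ℝ) - 3)})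
      (D := {f | (x:ℝ) < f 3})
      (by
        simp only [Set.setOf_forall]
        exact MeasurableSet.iInter fun q => MeasurableSet.iInter fun _ =>
          measurableSet_le (measurable_pi_apply _) (((measurable_kt 2).mul_const _).const_add _))
      (measurableSet_lt measurable_const (measurable_pi_apply _)) hW
      (by
        filter_upwards [hpaths, w1] with ω ⟨hc, M, hM1, hMb⟩ h1 h2
        have g := good_of_bound hc hMb
        simp only [Set.mem_setOf_eq, Kslope_eq, hYdef] at h1 h2
        rw [g.kt_eq (by norm_num)] at h2 ⊢
        exact h1 h2)
      (by
        filter_upwards [hpaths, w2] with ω ⟨hc, M, hM1, hMb⟩ h1 h2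
        have g := good_of_bound hc hMb
        simp only [Set.mem_setOf_eq, Kslope_eq, hYdef] at h1 h2
        rw [g.kt_eq (by norm_num)]
        exact h1 h2)
      (lpsi N) (lpsi2 N) (lpsi_pos N) (lpsi2_pos N)
  have hall : ∀ᵐ ω ∂P, False := by
    filter_upwards [hpaths, ae_all_iff.2 fun N => ae_all_iff.2 (key N)] with ω ⟨hc, M, hM1, hMb⟩ hk
    obtain ⟨x, h1, h2, h3⟩ := path2 hc hM1 hMb
    exact hk M x h1 h2 h3
  obtain ⟨_, h⟩ := hall.exists
  exact h

/-- Neither `(K(t), B(t))` nor `(K'(t), B(t))` is a Markov process. -/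
theorem K_B_and_Kslope_B_not_markov {Ω : Type*} [MeasurableSpace Ω] [StandardBorelSpace Ω]
    (P : Measure Ω) [IsProbabilityMeasure P] (B : ℝ → Ω → ℝ)
    (hB : IsBrownianMotion P B) :
    ¬ IsMarkov P (fun t ω => ((Kproc B t ω, B t ω) : ℝ × ℝ)) ∧
    ¬ IsMarkov P (fun t ω => ((Kslope B t ω, B t ω) : ℝ × ℝ)) := by
  exact ⟨part1 P B hB, part2 P B hB⟩
end
end
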